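/- arXiv:math/0401091 — 3 statements merged into one kernel-verified Lean document; each statement's English description precedes it below -/
import Mathlib

section
/- Let H be a complex Hilbert space and let A ∈ B(H) be hyponormal (A*A − AA* ≥ 0) of finite multiplicity, i.e., there are finitely many vectors x_1, …, x_m ∈ H such that the closed linear span of {Aⁿ x_j : n ≥ 0, 1 ≤ j ≤ m} equals H. Let B ∈ B(H) be such that B* is hyponormal (BB* − B*B ≥ 0). Then for every X ∈ B(H): if AX − XB is Hilbert–Schmidt, then A*X − XB* is Hilbert–Schmidt and ‖A*X − XB*‖₂ ≤ ‖AX − XB‖₂ (equivalently, with the convention ‖Y‖₂ = ∞ for non-Hilbert–Schmidt Y, one has ‖AX − XB‖₂ ≥ ‖A*X − XB*‖₂ for all X ∈ B(H)). -/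
open ContinuousLinearMap
open scoped ENNReal NNReal

/-- The squared Hilbert–Schmidt norm of an operator, computed in the Hilbert basis `b`
(the value is independent of the choice of basis); it equals `∞` precisely when the
operator is not Hilbert–Schmidt. -/
noncomputable def hsNormSq {E F : Type*} [NormedAddCommGroup E] [InnerProductSpace ℂ E]
    [NormedAddCommGroup F] [InnerProductSpace ℂ F] {ι : Type*} (b : HilbertBasis ι ℂ E)
    (T : E →L[ℂ] F) : ℝ≥0∞ :=
  ∑' i, (‖T (b i)‖₊ : ℝ≥0∞) ^ 2

/-!
For Hilbert–Schmidt `Z` the inequality `‖A*Z - ZB*‖₂ ≤ ‖AZ - ZB‖₂` is due to Berberian. A bounded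
`X` is approximated by `PX`, where `P` projects onto the span of the vectors `A ^ p (x j)`, `p < n`.
Then `A(PX) - (PX)B = P(AX - XB) + (AP - PA)X`. Hyponormality bounds the corner `PA(1 - P)` of the
commutator by the other corner `(1 - P)AP`, and the rank of the latter is at most the number of
generators. So these operators are bounded in Hilbert–Schmidt norm and converge weakly to `AX - XB`
as `n → ∞`, and Berberian's inequality survives the weak limit.
-/

open Filter Topology

section WeakConvergence

variable {𝕜 : Type*} [RCLike 𝕜] {α : Type*} {l : Filter α}

theorem mem_topologicalClosure_of_tendsto_inner {K : Type*} [NormedAddCommGroup K]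
    [InnerProductSpace 𝕜 K] [CompleteSpace K] [l.NeBot] {V : Submodule 𝕜 K} {f : α → K} {u : K}
    (hfV : ∀ a, f a ∈ V) (hfu : ∀ y, Tendsto (fun a => inner 𝕜 y (f a)) l (𝓝 (inner 𝕜 y u))) :
    u ∈ V.topologicalClosure := by
  rw [← V.orthogonal_orthogonal_eq_closure, Submodule.mem_orthogonal]
  intro y hy
  refine tendsto_nhds_unique (hfu y) ?_
  simp only [Submodule.inner_left_of_mem_orthogonal (hfV _) hy, tendsto_const_nhds]

/- The inequality passes to the norm closure of the graph `{(L y, L' y)}`, which is a subspace and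
hence weakly closed. -/
theorem norm_le_of_tendsto_inner {K K' Y : Type*} [NormedAddCommGroup K] [InnerProductSpace 𝕜 K]
    [CompleteSpace K] [NormedAddCommGroup K'] [InnerProductSpace 𝕜 K'] [CompleteSpace K']
    [AddCommGroup Y] [Module 𝕜 Y] [l.NeBot] {L : Y →ₗ[𝕜] K} {L' : Y →ₗ[𝕜] K'}
    (hL : ∀ y, ‖L' y‖ ≤ ‖L y‖) {z : α → Y} {u : K} {u' : K'}
    (hu : ∀ y, Tendsto (fun a => inner 𝕜 y (L (z a))) l (𝓝 (inner 𝕜 y u)))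
    (hu' : ∀ y, Tendsto (fun a => inner 𝕜 y (L' (z a))) l (𝓝 (inner 𝕜 y u'))) :
    ‖u'‖ ≤ ‖u‖ := by
  let graph : Submodule 𝕜 (WithLp 2 (K × K')) :=
    ((WithLp.linearEquiv 2 𝕜 (K × K')).symm.toLinearMap ∘ₗ L.prod L').range
  have hmem : WithLp.toLp 2 (u, u') ∈ graph.topologicalClosure :=
    mem_topologicalClosure_of_tendsto_inner (l := l) (fun a => LinearMap.mem_range_self _ (z a))
      fun y => by simpa [WithLp.prod_inner_apply] using (hu y.fst).add (hu' y.snd)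
  have hclosed : IsClosed {p : WithLp 2 (K × K') | ‖p.snd‖ ≤ ‖p.fst‖} :=
    isClosed_le (by fun_prop) (by fun_prop)
  refine closure_minimal ?_ hclosed hmem
  rintro _ ⟨y, rfl⟩
  exact hL y

variable {ι : Type*} {G : ι → Type*} [∀ i, NormedAddCommGroup (G i)]
  [∀ i, InnerProductSpace 𝕜 (G i)]

theorem tendsto_inner_of_tendsto_apply {C : ℝ} {f : α → lp G 2} {u : lp G 2}
    (hC : ∀ a, ‖f a‖ ≤ C) (hfu : ∀ i, Tendsto (fun a => f a i) l (𝓝 (u i))) (y : lp G 2) :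
    Tendsto (fun a => inner 𝕜 y (f a)) l (𝓝 (inner 𝕜 y u)) := by
  classical
  have hequi : Equicontinuous fun a (y : lp G 2) => inner 𝕜 y (f a) :=
    (LipschitzWith.uniformEquicontinuous _ C.toNNReal fun a =>
      .of_dist_le_mul fun y y' => by
        rw [dist_eq_norm, dist_eq_norm, ← inner_sub_left, mul_comm]
        refine (norm_inner_le_norm _ _).trans ?_
        gcongr
        exact (hC a).trans C.le_coe_toNNReal).equicontinuous
  refine (hequi.isClosed_setOfPred_tendsto (l := l) (by fun_prop :
    Continuous fun y : lp G 2 => inner 𝕜 y u)).mem_of_tendsto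
    (lp.hasSum_single ENNReal.ofNat_ne_top y) (.of_forall fun s => ?_)
  simp only [Set.mem_ofPred_eq, sum_inner, lp.inner_single_left]
  exact tendsto_finsetSum s fun i _ => tendsto_const_nhds.inner (hfu i)

theorem exists_lp_norm_le_of_tendsto_apply {G' : ι → Type*} [∀ i, NormedAddCommGroup (G' i)]
    [∀ i, InnerProductSpace 𝕜 (G' i)] [∀ i, CompleteSpace (G i)] [∀ i, CompleteSpace (G' i)]
    {Y : Type*} [AddCommGroup Y] [Module 𝕜 Y] [l.NeBot] {L : Y →ₗ[𝕜] lp G 2}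
    {L' : Y →ₗ[𝕜] lp G' 2} (hL : ∀ y, ‖L' y‖ ≤ ‖L y‖) {C : ℝ} {z : α → Y}
    (hC : ∀ a, ‖L (z a)‖ ≤ C) {u : ∀ i, G i} {u' : ∀ i, G' i}
    (hu : ∀ i, Tendsto (fun a => L (z a) i) l (𝓝 (u i)))
    (hu' : ∀ i, Tendsto (fun a => L' (z a) i) l (𝓝 (u' i))) :
    ∃ (v : lp G 2) (v' : lp G' 2), ⇑v = u ∧ ⇑v' = u' ∧ ‖v'‖ ≤ ‖v‖ := by
  have hC' (a) : ‖L' (z a)‖ ≤ C := (hL _).trans (hC a)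
  have hmem : Memℓp u 2 :=
    lp.memℓp_of_tendsto (isBounded_iff_forall_norm_le.2 ⟨C, Set.forall_mem_range.2 hC⟩)
      (tendsto_pi_nhds.2 hu)
  have hmem' : Memℓp u' 2 :=
    lp.memℓp_of_tendsto (isBounded_iff_forall_norm_le.2 ⟨C, Set.forall_mem_range.2 hC'⟩)
      (tendsto_pi_nhds.2 hu')
  exact ⟨⟨u, hmem⟩, ⟨u', hmem'⟩, rfl, rfl,
    norm_le_of_tendsto_inner hL (tendsto_inner_of_tendsto_apply hC hu)
      (tendsto_inner_of_tendsto_apply hC' hu')⟩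

end WeakConvergence

theorem enorm_sq_eq_tsum_enorm_sq {ι : Type*} {G : ι → Type*} [∀ i, NormedAddCommGroup (G i)]
    (f : lp G 2) : ‖f‖ₑ ^ 2 = ∑' i, ‖f i‖ₑ ^ 2 := by
  have hsum : HasSum (fun i => ‖f i‖₊ ^ 2) (‖f‖₊ ^ 2) := by
    rw [← NNReal.hasSum_coe]
    simpa using lp.hasSum_norm (p := 2) (by norm_num) f
  simpa [enorm_eq_nnnorm] using (ENNReal.hasSum_coe.2 hsum).tsum_eq.symm

section HilbertSchmidtNorm

variable {E F G : Type*} [NormedAddCommGroup E] [InnerProductSpace ℂ E]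
  [NormedAddCommGroup F] [InnerProductSpace ℂ F] [NormedAddCommGroup G] [InnerProductSpace ℂ G]
  {ι κ : Type*} (b : HilbertBasis ι ℂ E) (c : HilbertBasis κ ℂ F)

theorem hsNormSq_eq_tsum_enorm_sq (T : E →L[ℂ] F) : hsNormSq b T = ∑' i, ‖T (b i)‖ₑ ^ 2 := rfl

theorem tsum_enorm_inner_sq (v : E) : ∑' i, ‖inner ℂ (b i) v‖ₑ ^ 2 = ‖v‖ₑ ^ 2 := by
  simp only [← b.repr_apply_apply, ← enorm_sq_eq_tsum_enorm_sq]
  rw [← ofReal_norm, b.repr.norm_map, ofReal_norm]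

theorem hsNormSq_adjoint [CompleteSpace E] [CompleteSpace F] (T : E →L[ℂ] F) :
    hsNormSq c (adjoint T) = hsNormSq b T := by
  simp only [hsNormSq_eq_tsum_enorm_sq, ← tsum_enorm_inner_sq b, ← tsum_enorm_inner_sq c]
  rw [ENNReal.tsum_comm]
  simp only [adjoint_inner_right, ← ofReal_norm, norm_inner_symm (𝕜 := ℂ) (T _)]

theorem hsNormSq_le_of_norm_apply_le {S : E →L[ℂ] F} {T : E →L[ℂ] G}
    (hST : ∀ v, ‖S v‖ ≤ ‖T v‖) : hsNormSq b S ≤ hsNormSq b T :=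
  ENNReal.tsum_le_tsum fun i => by gcongr; exact hST (b i)

theorem hsNormSq_neg (T : E →L[ℂ] F) : hsNormSq b (-T) = hsNormSq b T := by
  simp [hsNormSq]

theorem hsNormSq_smul (a : ℂ) (T : E →L[ℂ] F) :
    hsNormSq b (a • T) = ‖a‖ₑ ^ 2 * hsNormSq b T := by
  simp only [hsNormSq_eq_tsum_enorm_sq, FunLike.coe_smul, Pi.smul_apply, enorm_smul, mul_pow,
    ENNReal.tsum_mul_left]

theorem hsNormSq_add_le (S T : E →L[ℂ] F) :
    hsNormSq b (S + T) ≤ 2 * (hsNormSq b S + hsNormSq b T) := by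
  simp only [hsNormSq, ← ENNReal.tsum_add, ← ENNReal.tsum_mul_left]
  refine ENNReal.tsum_le_tsum fun i => ?_
  norm_cast
  exact (pow_le_pow_left' (nnnorm_add_le _ _) 2).trans add_sq_le

theorem hsNormSq_comp_le_left (S : F →L[ℂ] G) (T : E →L[ℂ] F) :
    hsNormSq b (S ∘L T) ≤ ‖S‖ₑ ^ 2 * hsNormSq b T := by
  simp only [hsNormSq_eq_tsum_enorm_sq, ← ENNReal.tsum_mul_left, ← mul_pow]
  exact ENNReal.tsum_le_tsum fun i => by gcongr; exact S.le_opENorm _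

theorem hsNormSq_comp_le_right [CompleteSpace E] [CompleteSpace F] [CompleteSpace G]
    (S : F →L[ℂ] G) (T : E →L[ℂ] F) :
    hsNormSq b (S ∘L T) ≤ ‖T‖ₑ ^ 2 * hsNormSq c S := by
  obtain ⟨_, d, -⟩ := exists_hilbertBasis ℂ G
  calc hsNormSq b (S ∘L T) = hsNormSq d (adjoint T ∘L adjoint S) := by
        rw [← adjoint_comp, hsNormSq_adjoint b]
    _ ≤ ‖adjoint T‖ₑ ^ 2 * hsNormSq d (adjoint S) := hsNormSq_comp_le_left d _ _
    _ = ‖T‖ₑ ^ 2 * hsNormSq c S := by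
        rw [hsNormSq_adjoint c, ← ofReal_norm, LinearIsometryEquiv.norm_map, ofReal_norm]

theorem hsNormSq_le_finrank_mul [CompleteSpace E] {V : Submodule ℂ F} [FiniteDimensional ℂ V]
    {T : E →L[ℂ] F} (hTV : ∀ v, T v ∈ V) :
    hsNormSq b T ≤ Module.finrank ℂ V * ‖T‖ₑ ^ 2 := by
  let e := (stdOrthonormalBasis ℂ V).toHilbertBasis
  let T' : E →L[ℂ] V := T.codRestrict V hTV
  have hT' : ‖adjoint T'‖ ≤ ‖T‖ :=
    (LinearIsometryEquiv.norm_map _ _).trans_le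
      (T'.opNorm_le_bound (norm_nonneg T) fun v => T.le_opNorm v)
  have he (j) : ‖adjoint T' (e j)‖ ≤ ‖T‖ := by
    simpa [e.orthonormal.1 j] using (adjoint T').le_of_opNorm_le hT' (e j)
  calc hsNormSq b T = hsNormSq e (adjoint T') := (hsNormSq_adjoint b e T').symm
    _ = ∑ j, ‖adjoint T' (e j)‖ₑ ^ 2 := tsum_fintype _
    _ ≤ ∑ _j : Fin (Module.finrank ℂ V), ‖T‖ₑ ^ 2 := by
        gcongr with j
        exact enorm_le_iff_norm_le.2 (he j)
    _ = Module.finrank ℂ V * ‖T‖ₑ ^ 2 := by simp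

theorem hsNormSq_starProjection_comp_ne_top [CompleteSpace E] (V : Submodule ℂ F)
    [FiniteDimensional ℂ V] (T : E →L[ℂ] F) : hsNormSq b (V.starProjection ∘L T) ≠ ∞ :=
  ne_top_of_le_ne_top (by finiteness)
    (hsNormSq_le_finrank_mul b fun v => V.starProjection_apply_mem (T v))

theorem hsNormSq_eq_add_starProjection (V : Submodule ℂ F) [V.HasOrthogonalProjection]
    (T : E →L[ℂ] F) :
    hsNormSq b T = hsNormSq b (V.starProjection ∘L T) + hsNormSq b (Vᗮ.starProjection ∘L T) := by
  simp only [hsNormSq, ← ENNReal.tsum_add, comp_apply]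
  refine tsum_congr fun i => ?_
  norm_cast
  exact NNReal.eq (by simpa using V.norm_sq_eq_add_norm_sq_starProjection (T (b i)))

end HilbertSchmidtNorm

section Hyponormal

variable {F : Type*} [NormedAddCommGroup F] [InnerProductSpace ℂ F] [CompleteSpace F]
  {κ : Type*} (c : HilbertBasis κ ℂ F) {A : F →L[ℂ] F}

theorem norm_adjoint_apply_le_of_hyponormal
    (hA : IsPositive (adjoint A ∘L A - A ∘L adjoint A)) (v : F) : ‖adjoint A v‖ ≤ ‖A v‖ := by
  have hsq : 0 ≤ ‖A v‖ ^ 2 - ‖adjoint A v‖ ^ 2 := by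
    rw [apply_norm_sq_eq_inner_adjoint_left, apply_norm_sq_eq_inner_adjoint_left,
      adjoint_adjoint, ← map_sub, ← inner_sub_left]
    exact hA.re_inner_nonneg_left v
  exact (sq_le_sq₀ (norm_nonneg _) (norm_nonneg _)).1 (sub_nonneg.1 hsq)

variable (V : Submodule ℂ F)

-- The corner `PAP` of `A` has the same norm as that of `A*` and cancels from `‖A*P‖₂ ≤ ‖AP‖₂`.
theorem hsNormSq_upper_corner_le [FiniteDimensional ℂ V] (hA : ∀ v, ‖adjoint A v‖ ≤ ‖A v‖) :
    hsNormSq c (V.starProjection ∘L A ∘L Vᗮ.starProjection) ≤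
      hsNormSq c (Vᗮ.starProjection ∘L A ∘L V.starProjection) := by
  have hadj (U W : Submodule ℂ F) [U.HasOrthogonalProjection] [W.HasOrthogonalProjection] :
      hsNormSq c (U.starProjection ∘L adjoint A ∘L W.starProjection) =
        hsNormSq c (W.starProjection ∘L A ∘L U.starProjection) := by
    rw [← hsNormSq_adjoint c c]
    simp only [adjoint_comp, adjoint_adjoint, (isSelfAdjoint_starProjection _).adjoint_eq,
      comp_assoc]
  have hle : hsNormSq c (adjoint A ∘L V.starProjection) ≤ hsNormSq c (A ∘L V.starProjection) :=
    hsNormSq_le_of_norm_apply_le c fun v => hA (V.starProjection v)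
  rw [hsNormSq_eq_add_starProjection c V, hsNormSq_eq_add_starProjection c V (A ∘L _),
    hadj, hadj] at hle
  exact (ENNReal.add_le_add_iff_left (hsNormSq_starProjection_comp_ne_top c V _)).1 hle

theorem hsNormSq_commutator_starProjection_le [FiniteDimensional ℂ V]
    (hA : ∀ v, ‖adjoint A v‖ ≤ ‖A v‖) :
    hsNormSq c (A ∘L V.starProjection - V.starProjection ∘L A) ≤
      2 * hsNormSq c (Vᗮ.starProjection ∘L A ∘L V.starProjection) := by
  have hidem (w : F) : V.starProjection (V.starProjection w) = V.starProjection w :=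
    V.starProjection_eq_self_iff.2 (V.starProjection_apply_mem w)
  have hupper : V.starProjection ∘L (A ∘L V.starProjection - V.starProjection ∘L A) =
      -(V.starProjection ∘L A ∘L Vᗮ.starProjection) := by
    ext v
    simp [Submodule.starProjection_orthogonal_val, hidem]
  have hlower : Vᗮ.starProjection ∘L (A ∘L V.starProjection - V.starProjection ∘L A) =
      Vᗮ.starProjection ∘L A ∘L V.starProjection := by
    ext v
    simp [Submodule.starProjection_orthogonal_val, hidem]
  rw [hsNormSq_eq_add_starProjection c V, hupper, hlower, hsNormSq_neg, two_mul]
  gcongr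
  exact hsNormSq_upper_corner_le c V hA

theorem hsNormSq_lower_corner_le [V.HasOrthogonalProjection] {W : Submodule ℂ F}
    [FiniteDimensional ℂ W] (hAV : V.map A.toLinearMap ≤ V ⊔ W) :
    hsNormSq c (Vᗮ.starProjection ∘L A ∘L V.starProjection) ≤
      Module.finrank ℂ W * ‖A‖ₑ ^ 2 := by
  have hrange (v : F) : (Vᗮ.starProjection ∘L A ∘L V.starProjection) v ∈
      W.map Vᗮ.starProjection.toLinearMap := by
    obtain ⟨y, hy, w, hw, hyw⟩ :=
      Submodule.mem_sup.1 (hAV ⟨_, V.starProjection_apply_mem v, rfl⟩)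
    refine ⟨w, hw, ?_⟩
    simp only [coe_coe] at hyw
    simp [← hyw, Submodule.starProjection_orthogonal_val, V.starProjection_eq_self_iff.2 hy]
  refine (hsNormSq_le_finrank_mul c hrange).trans ?_
  have hnorm : ‖Vᗮ.starProjection ∘L A ∘L V.starProjection‖ ≤ ‖A‖ := by
    refine opNorm_le_bound _ (norm_nonneg A) fun v => ?_
    exact (Vᗮ.norm_starProjection_apply_le _).trans
      (A.le_opNorm_of_le (V.norm_starProjection_apply_le v))
  gcongr
  · exact Submodule.finrank_map_le _ W
  · exact enorm_le_iff_norm_le.2 hnorm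

end Hyponormal

section HilbertSchmidtOperators

variable {E F : Type*} [NormedAddCommGroup E] [InnerProductSpace ℂ E] [NormedAddCommGroup F]
  [InnerProductSpace ℂ F] {ι κ : Type*}

/-- The space of Hilbert–Schmidt operators from `E` to `F`, with the Hilbert–Schmidt norm computed
in the Hilbert basis `b` of `E`. As a subspace of `E →L[ℂ] F` it carries the operator norm; the
Hilbert–Schmidt norm of `T` is `‖hilbertSchmidt.toLp T‖`. -/
def hilbertSchmidt (b : HilbertBasis ι ℂ E) (F : Type*) [NormedAddCommGroup F]
    [InnerProductSpace ℂ F] : Submodule ℂ (E →L[ℂ] F) where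
  carrier := {T | hsNormSq b T ≠ ∞}
  zero_mem' := by simp [hsNormSq]
  add_mem' {S T} (hS : hsNormSq b S ≠ ∞) (hT : hsNormSq b T ≠ ∞) :=
    show hsNormSq b (S + T) ≠ ∞ from
      ne_top_of_le_ne_top (by finiteness) (hsNormSq_add_le b S T)
  smul_mem' a T (hT : hsNormSq b T ≠ ∞) :=
    show hsNormSq b (a • T) ≠ ∞ by rw [hsNormSq_smul]; finiteness

namespace hilbertSchmidt

variable {b : HilbertBasis ι ℂ E} {c : HilbertBasis κ ℂ F}

theorem mem_iff {T : E →L[ℂ] F} : T ∈ hilbertSchmidt b F ↔ hsNormSq b T ≠ ∞ := Iff.rfl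

theorem memℓp {T : E →L[ℂ] F} (hT : T ∈ hilbertSchmidt b F) : Memℓp (fun i => T (b i)) 2 := by
  rw [memℓp_gen_iff (by simp)]
  have hsum : Summable fun i => ‖T (b i)‖₊ ^ 2 := ENNReal.tsum_coe_ne_top_iff_summable.1 <| by
    simpa only [hsNormSq, ENNReal.coe_pow] using mem_iff.1 hT
  simpa using NNReal.summable_coe.2 hsum

/-- A Hilbert–Schmidt operator as the square-summable family of its values on the Hilbert basis.
This transports the inner product of `lp` to Hilbert–Schmidt operators. -/
noncomputable def toLp : hilbertSchmidt b F →ₗ[ℂ] lp (fun _ : ι => F) 2 where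
  toFun T := ⟨fun i => (T : E →L[ℂ] F) (b i), memℓp T.2⟩
  map_add' _ _ := rfl
  map_smul' _ _ := rfl

theorem toLp_apply (T : hilbertSchmidt b F) (i : ι) : toLp T i = (T : E →L[ℂ] F) (b i) := rfl

theorem enorm_toLp_sq (T : hilbertSchmidt b F) :
    ‖toLp T‖ₑ ^ 2 = hsNormSq b (T : E →L[ℂ] F) :=
  enorm_sq_eq_tsum_enorm_sq _

theorem norm_toLp_le_iff {E' F' ι' : Type*} [NormedAddCommGroup E'] [InnerProductSpace ℂ E']
    [NormedAddCommGroup F'] [InnerProductSpace ℂ F'] {b' : HilbertBasis ι' ℂ E'}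
    {S : hilbertSchmidt b F} {T : hilbertSchmidt b' F'} :
    ‖toLp S‖ ≤ ‖toLp T‖ ↔
      hsNormSq b (S : E →L[ℂ] F) ≤ hsNormSq b' (T : E' →L[ℂ] F') := by
  rw [← enorm_toLp_sq, ← enorm_toLp_sq, ENNReal.pow_le_pow_left_iff two_ne_zero,
    enorm_le_iff_norm_le]

theorem norm_toLp_le_sqrt {T : hilbertSchmidt b F} {M : ℝ≥0∞} (hM : M ≠ ∞)
    (hTM : hsNormSq b (T : E →L[ℂ] F) ≤ M) : ‖toLp T‖ ≤ √M.toReal := by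
  refine Real.le_sqrt_of_sq_le ?_
  rw [← toReal_enorm, ← ENNReal.toReal_pow, enorm_toLp_sq]
  exact ENNReal.toReal_mono hM hTM

/-- Left multiplication `Z ↦ AZ` on Hilbert–Schmidt operators. -/
noncomputable def leftMul (A : F →L[ℂ] F) : hilbertSchmidt b F →ₗ[ℂ] hilbertSchmidt b F :=
  (postcomp E A).toLinearMap.restrict fun Z hZ =>
    mem_iff.2 <| ne_top_of_le_ne_top (ENNReal.mul_ne_top (by finiteness) (mem_iff.1 hZ))
      (hsNormSq_comp_le_left b A Z)

theorem coe_leftMul (A : F →L[ℂ] F) (Z : hilbertSchmidt b F) :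
    (leftMul A Z : E →L[ℂ] F) = A ∘L (Z : E →L[ℂ] F) := rfl

variable [CompleteSpace F]

theorem inner_toLp_leftMul (A : F →L[ℂ] F) (S T : hilbertSchmidt b F) :
    inner ℂ (toLp (leftMul A S)) (toLp T) = inner ℂ (toLp S) (toLp (leftMul (adjoint A) T)) := by
  simp only [lp.inner_eq_tsum, toLp_apply, coe_leftMul, comp_apply, adjoint_inner_right]

theorem norm_toLp_leftMul_adjoint_le {A : F →L[ℂ] F} (hA : ∀ v, ‖adjoint A v‖ ≤ ‖A v‖)
    (Z : hilbertSchmidt b F) : ‖toLp (leftMul (adjoint A) Z)‖ ≤ ‖toLp (leftMul A Z)‖ :=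
  norm_toLp_le_iff.2 (hsNormSq_le_of_norm_apply_le b fun v => hA ((Z : E →L[ℂ] F) v))

variable [CompleteSpace E]

/-- Right multiplication `Z ↦ ZB` on Hilbert–Schmidt operators. -/
noncomputable def rightMul (B : E →L[ℂ] E) : hilbertSchmidt b F →ₗ[ℂ] hilbertSchmidt b F :=
  (precomp F B).toLinearMap.restrict fun Z hZ =>
    mem_iff.2 <| ne_top_of_le_ne_top (ENNReal.mul_ne_top (by finiteness) (mem_iff.1 hZ))
      (hsNormSq_comp_le_right b b Z B)

/-- The adjoint as a conjugate-linear map between spaces of Hilbert–Schmidt operators. -/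
noncomputable def adjointMap (c : HilbertBasis κ ℂ F) :
    hilbertSchmidt b F →ₗ⋆[ℂ] hilbertSchmidt c E where
  toFun Z := ⟨adjoint (Z : E →L[ℂ] F), (hsNormSq_adjoint b c (Z : E →L[ℂ] F)).trans_ne Z.2⟩
  map_add' _ _ := Subtype.ext (map_add _ _ _)
  map_smul' _ _ := Subtype.ext (map_smulₛₗ _ _ _)

theorem adjointMap_rightMul (B : E →L[ℂ] E) (Z : hilbertSchmidt b F) :
    adjointMap c (rightMul B Z) = leftMul (adjoint B) (adjointMap c Z) :=
  Subtype.ext (adjoint_comp _ B)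

theorem norm_toLp_adjointMap (Z : hilbertSchmidt b F) : ‖toLp (adjointMap c Z)‖ = ‖toLp Z‖ :=
  le_antisymm (norm_toLp_le_iff.2 (hsNormSq_adjoint b c _).le)
    (norm_toLp_le_iff.2 (hsNormSq_adjoint b c _).ge)

theorem re_inner_toLp_adjointMap (S T : hilbertSchmidt b F) :
    RCLike.re (inner ℂ (toLp (adjointMap c S)) (toLp (adjointMap c T))) =
      RCLike.re (inner ℂ (toLp S) (toLp T)) := by
  simp only [re_inner_eq_norm_add_mul_self_sub_norm_sub_mul_self_div_four, ← map_add, ← map_sub,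
    norm_toLp_adjointMap]

theorem re_inner_toLp_rightMul (B : E →L[ℂ] E) (S T : hilbertSchmidt b F) :
    RCLike.re (inner ℂ (toLp (rightMul B S)) (toLp T)) =
      RCLike.re (inner ℂ (toLp S) (toLp (rightMul (adjoint B) T))) := by
  obtain ⟨_, c, -⟩ := exists_hilbertBasis ℂ F
  rw [← re_inner_toLp_adjointMap (c := c), ← re_inner_toLp_adjointMap (c := c) S,
    adjointMap_rightMul, adjointMap_rightMul, inner_toLp_leftMul]

theorem norm_toLp_rightMul_adjoint_le {B : E →L[ℂ] E} (hB : ∀ v, ‖B v‖ ≤ ‖adjoint B v‖)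
    (Z : hilbertSchmidt b F) : ‖toLp (rightMul (adjoint B) Z)‖ ≤ ‖toLp (rightMul B Z)‖ := by
  obtain ⟨_, c, -⟩ := exists_hilbertBasis ℂ F
  rw [← norm_toLp_adjointMap (c := c), ← norm_toLp_adjointMap (c := c) (rightMul B Z),
    adjointMap_rightMul, adjointMap_rightMul]
  refine norm_toLp_leftMul_adjoint_le (A := adjoint B) ?_ _
  simpa only [adjoint_adjoint] using hB

/-- The operator `Z ↦ AZ - ZB` on Hilbert–Schmidt operators. -/
noncomputable def generalizedDerivation (A : F →L[ℂ] F) (B : E →L[ℂ] E) :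
    hilbertSchmidt b F →ₗ[ℂ] hilbertSchmidt b F :=
  leftMul A - rightMul B

theorem coe_generalizedDerivation (A : F →L[ℂ] F) (B : E →L[ℂ] E) (Z : hilbertSchmidt b F) :
    (generalizedDerivation A B Z : E →L[ℂ] F) =
      A ∘L (Z : E →L[ℂ] F) - (Z : E →L[ℂ] F) ∘L B := rfl

-- Left and right multiplications commute, so the cross terms of the two squared norms agree.
theorem norm_toLp_generalizedDerivation_adjoint_le {A : F →L[ℂ] F} {B : E →L[ℂ] E}
    (hA : ∀ v, ‖adjoint A v‖ ≤ ‖A v‖) (hB : ∀ v, ‖B v‖ ≤ ‖adjoint B v‖)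
    (Z : hilbertSchmidt b F) :
    ‖toLp (generalizedDerivation (adjoint A) (adjoint B) Z)‖ ≤
      ‖toLp (generalizedDerivation A B Z)‖ := by
  have hcomm : leftMul (adjoint A) (rightMul B Z) = rightMul B (leftMul (adjoint A) Z) := rfl
  have hinner : RCLike.re (inner ℂ (toLp (leftMul A Z)) (toLp (rightMul B Z))) =
      RCLike.re
        (inner ℂ (toLp (leftMul (adjoint A) Z)) (toLp (rightMul (adjoint B) Z))) := by
    rw [inner_toLp_leftMul, hcomm, inner_re_symm, re_inner_toLp_rightMul]
  rw [← sq_le_sq₀ (norm_nonneg _) (norm_nonneg _)]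
  simp only [generalizedDerivation, LinearMap.sub_apply, map_sub, norm_sub_sq (𝕜 := ℂ), hinner]
  gcongr
  · exact norm_toLp_leftMul_adjoint_le hA Z
  · exact norm_toLp_rightMul_adjoint_le hB Z

end hilbertSchmidt

open hilbertSchmidt in
theorem hsNormSq_adjoint_le_of_tendsto [CompleteSpace E] [CompleteSpace F]
    {b : HilbertBasis ι ℂ E} {A : F →L[ℂ] F} {B : E →L[ℂ] E} (hA : ∀ v, ‖adjoint A v‖ ≤ ‖A v‖)
    (hB : ∀ v, ‖B v‖ ≤ ‖adjoint B v‖) {α : Type*} {l : Filter α} [l.NeBot]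
    {Z : α → E →L[ℂ] F} {X : E →L[ℂ] F} (hZX : ∀ v, Tendsto (fun a => Z a v) l (𝓝 (X v)))
    (hZ : ∀ a, hsNormSq b (Z a) ≠ ∞) {M : ℝ≥0∞} (hM : M ≠ ∞)
    (hZM : ∀ a, hsNormSq b (A ∘L Z a - Z a ∘L B) ≤ M) :
    hsNormSq b (adjoint A ∘L X - X ∘L adjoint B) ≤ hsNormSq b (A ∘L X - X ∘L B) := by
  let W (a : α) : hilbertSchmidt b F := ⟨Z a, mem_iff.2 (hZ a)⟩
  have htendsto (A' : F →L[ℂ] F) (B' : E →L[ℂ] E) (i : ι) :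
      Tendsto (fun a => toLp (generalizedDerivation A' B' (W a)) i) l
        (𝓝 ((A' ∘L X - X ∘L B') (b i))) := by
    simp only [toLp_apply, coe_generalizedDerivation]
    exact ((A'.continuous.tendsto _).comp (hZX (b i))).sub (hZX (B' (b i)))
  have hbound (a : α) : ‖toLp (generalizedDerivation A B (W a))‖ ≤ √M.toReal :=
    norm_toLp_le_sqrt hM (by rw [coe_generalizedDerivation]; exact hZM a)
  obtain ⟨v, v', hv, hv', hle⟩ := exists_lp_norm_le_of_tendsto_apply
    (L := toLp ∘ₗ generalizedDerivation A B)
    (L' := toLp ∘ₗ generalizedDerivation (adjoint A) (adjoint B))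
    (norm_toLp_generalizedDerivation_adjoint_le hA hB) hbound
    (htendsto A B) (htendsto (adjoint A) (adjoint B))
  simp only [hsNormSq_eq_tsum_enorm_sq, ← congrFun hv, ← congrFun hv',
    ← enorm_sq_eq_tsum_enorm_sq]
  gcongr
  exact enorm_le_iff_norm_le.2 hle

end HilbertSchmidtOperators

section FiniteRankApproximation

variable {E F : Type*} [NormedAddCommGroup E] [InnerProductSpace ℂ E] [CompleteSpace E]
  [NormedAddCommGroup F] [InnerProductSpace ℂ F] [CompleteSpace F] {ι κ : Type*}
  (b : HilbertBasis ι ℂ E) (c : HilbertBasis κ ℂ F) {A : F →L[ℂ] F} {B : E →L[ℂ] E}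

theorem hsNormSq_generalizedDerivation_starProjection_comp_le
    (hA : ∀ v, ‖adjoint A v‖ ≤ ‖A v‖) (V : Submodule ℂ F) [FiniteDimensional ℂ V]
    (X : E →L[ℂ] F) :
    hsNormSq b (A ∘L (V.starProjection ∘L X) - (V.starProjection ∘L X) ∘L B) ≤
      2 * (hsNormSq b (A ∘L X - X ∘L B) +
        ‖X‖ₑ ^ 2 * (2 * hsNormSq c (Vᗮ.starProjection ∘L A ∘L V.starProjection))) := by
  have hsplit : A ∘L (V.starProjection ∘L X) - (V.starProjection ∘L X) ∘L B =
      V.starProjection ∘L (A ∘L X - X ∘L B) +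
        (A ∘L V.starProjection - V.starProjection ∘L A) ∘L X := by
    ext v
    simp
  rw [hsplit]
  refine (hsNormSq_add_le b _ _).trans ?_
  gcongr
  · exact hsNormSq_le_of_norm_apply_le b fun v => V.norm_starProjection_apply_le _
  · refine (hsNormSq_comp_le_right b c _ X).trans ?_
    gcongr
    exact hsNormSq_commutator_starProjection_le c V hA

theorem hsNormSq_adjoint_le_of_tendsto_starProjection {α : Type*} {l : Filter α} [l.NeBot]
    (hA : ∀ v, ‖adjoint A v‖ ≤ ‖A v‖) (hB : ∀ v, ‖B v‖ ≤ ‖adjoint B v‖)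
    {V : α → Submodule ℂ F} [∀ a, FiniteDimensional ℂ (V a)]
    (hV : ∀ y, Tendsto (fun a => (V a).starProjection y) l (𝓝 y)) {C : ℝ≥0∞} (hC : C ≠ ∞)
    (hAV : ∀ a, hsNormSq c ((V a)ᗮ.starProjection ∘L A ∘L (V a).starProjection) ≤ C)
    (X : E →L[ℂ] F) :
    hsNormSq b (adjoint A ∘L X - X ∘L adjoint B) ≤ hsNormSq b (A ∘L X - X ∘L B) := by
  obtain htop | hfin := eq_or_ne (hsNormSq b (A ∘L X - X ∘L B)) ∞
  · exact htop ▸ le_top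
  refine hsNormSq_adjoint_le_of_tendsto hA hB (fun v => hV (X v))
    (fun a => hsNormSq_starProjection_comp_ne_top b (V a) X)
    (M := 2 * (hsNormSq b (A ∘L X - X ∘L B) + ‖X‖ₑ ^ 2 * (2 * C))) (by finiteness) fun a => ?_
  refine (hsNormSq_generalizedDerivation_starProjection_comp_le b c hA (V a) X).trans ?_
  gcongr
  exact hAV a

end FiniteRankApproximation

section Krylov

variable {𝕜 F κ : Type*} [Field 𝕜] [AddCommGroup F] [Module 𝕜 F] [TopologicalSpace F]

/-- The Krylov subspace spanned by the vectors `A ^ p (x j)` with `p < n`. -/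
def krylovSubspace (A : F →L[𝕜] F) (x : κ → F) (n : ℕ) : Submodule 𝕜 F :=
  Submodule.span 𝕜 (Set.range fun q : κ × Fin n => (A ^ (q.2 : ℕ)) (x q.1))

variable (A : F →L[𝕜] F) (x : κ → F)

instance krylovSubspace.finiteDimensional [Finite κ] (n : ℕ) :
    FiniteDimensional 𝕜 (krylovSubspace A x n) :=
  .span_of_finite 𝕜 (Set.finite_range _)

variable {A x} in
theorem pow_apply_mem_krylovSubspace {n p : ℕ} (hp : p < n) (j : κ) :
    (A ^ p) (x j) ∈ krylovSubspace A x n :=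
  Submodule.subset_span ⟨(j, ⟨p, hp⟩), rfl⟩

theorem monotone_krylovSubspace : Monotone (krylovSubspace A x) := by
  intro m n hmn
  refine Submodule.span_le.2 ?_
  rintro _ ⟨⟨j, p⟩, rfl⟩
  exact pow_apply_mem_krylovSubspace (p.2.trans_le hmn) j

theorem map_krylovSubspace_le (n : ℕ) :
    (krylovSubspace A x n).map A.toLinearMap ≤
      krylovSubspace A x n ⊔ Submodule.span 𝕜 (Set.range fun j => (A ^ n) (x j)) := by
  rw [krylovSubspace, Submodule.map_span_le]
  rintro _ ⟨⟨j, p, hp⟩, rfl⟩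
  have hstep : A ((A ^ p) (x j)) = (A ^ (p + 1)) (x j) := by rw [pow_succ', mul_apply_eq_comp]
  obtain hlt | rfl := (Nat.succ_le_of_lt hp).lt_or_eq
  · exact Submodule.mem_sup_left (hstep ▸ pow_apply_mem_krylovSubspace hlt j)
  · exact Submodule.mem_sup_right (hstep ▸ Submodule.subset_span ⟨j, rfl⟩)

end Krylov

theorem tendsto_starProjection_krylovSubspace {𝕜 F κ : Type*} [RCLike 𝕜]
    [NormedAddCommGroup F] [InnerProductSpace 𝕜 F] [CompleteSpace F] [Finite κ] (A : F →L[𝕜] F)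
    (x : κ → F)
    (hx : (Submodule.span 𝕜 {v | ∃ (j : κ) (p : ℕ), v = (A ^ p) (x j)}).topologicalClosure = ⊤)
    (y : F) : Tendsto (fun n => (krylovSubspace A x n).starProjection y) atTop (𝓝 y) := by
  refine Submodule.starProjection_tendsto_self _ (monotone_krylovSubspace A x) y ?_
  rw [← hx]
  refine Submodule.topologicalClosure_mono (Submodule.span_le.2 ?_)
  rintro _ ⟨j, p, rfl⟩
  exact Submodule.mem_iSup_of_mem (p + 1) (pow_apply_mem_krylovSubspace p.lt_succ_self j)

theorem hsNormSq_lower_corner_krylovSubspace_le {F κ μ : Type*} [NormedAddCommGroup F]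
    [InnerProductSpace ℂ F] [CompleteSpace F] [Finite κ] (c : HilbertBasis μ ℂ F)
    (A : F →L[ℂ] F) (x : κ → F) (n : ℕ) :
    hsNormSq c ((krylovSubspace A x n)ᗮ.starProjection ∘L A ∘L
      (krylovSubspace A x n).starProjection) ≤ Nat.card κ * ‖A‖ₑ ^ 2 := by
  have := Fintype.ofFinite κ
  have : FiniteDimensional ℂ (Submodule.span ℂ (Set.range fun j => (A ^ n) (x j))) :=
    .span_of_finite ℂ (Set.finite_range _)
  refine (hsNormSq_lower_corner_le c _ (map_krylovSubspace_le A x n)).trans ?_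
  gcongr
  rw [Nat.card_eq_fintype_card]
  exact finrank_range_le_card _

theorem hsNormSq_adjoint_le_of_hyponormal_general
    {E F : Type*} [NormedAddCommGroup E] [InnerProductSpace ℂ E] [CompleteSpace E]
    [NormedAddCommGroup F] [InnerProductSpace ℂ F] [CompleteSpace F]
    {ι : Type*} (b : HilbertBasis ι ℂ E)
    (A : F →L[ℂ] F) (hA : IsPositive (adjoint A ∘L A - A ∘L adjoint A))
    {κ : Type*} [Finite κ] (x : κ → F)
    (hx : (Submodule.span ℂ {v | ∃ (j : κ) (p : ℕ), v = (A ^ p) (x j)}).topologicalClosure = ⊤)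
    (B : E →L[ℂ] E) (hB : IsPositive (B ∘L adjoint B - adjoint B ∘L B))
    (X : E →L[ℂ] F) :
    hsNormSq b (adjoint A ∘L X - X ∘L adjoint B) ≤ hsNormSq b (A ∘L X - X ∘L B) := by
  obtain ⟨_, c, -⟩ := exists_hilbertBasis ℂ F
  have hB' (v : E) : ‖B v‖ ≤ ‖adjoint B v‖ := by
    simpa only [adjoint_adjoint] using
      norm_adjoint_apply_le_of_hyponormal (A := adjoint B) (by rwa [adjoint_adjoint]) v
  exact hsNormSq_adjoint_le_of_tendsto_starProjection b c
    (norm_adjoint_apply_le_of_hyponormal hA) hB'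
    (tendsto_starProjection_krylovSubspace A x hx) (by finiteness)
    (hsNormSq_lower_corner_krylovSubspace_le c A x) X

/-- If `A` is a hyponormal operator of finite multiplicity and `B*` is hyponormal, then
`‖A*X - XB*‖₂ ≤ ‖AX - XB‖₂` for every bounded operator `X` (with the convention that the
Hilbert–Schmidt norm of a non-Hilbert–Schmidt operator is `∞`). -/
theorem hsNormSq_adjoint_le_of_hyponormal
    {H : Type*} [NormedAddCommGroup H] [InnerProductSpace ℂ H] [CompleteSpace H]
    {ι : Type*} (b : HilbertBasis ι ℂ H)
    (A : H →L[ℂ] H) (hA : IsPositive (adjoint A ∘L A - A ∘L adjoint A))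
    (hmult : ∃ (m : ℕ) (x : Fin m → H),
      (Submodule.span ℂ {v : H | ∃ (j : Fin m) (p : ℕ), v = (A ^ p) (x j)}).topologicalClosure
        = ⊤)
    (B : H →L[ℂ] H) (hB : IsPositive (B ∘L adjoint B - adjoint B ∘L B))
    (X : H →L[ℂ] H) :
    hsNormSq b (adjoint A ∘L X - X ∘L adjoint B) ≤ hsNormSq b (A ∘L X - X ∘L B) := by
  obtain ⟨_, x, hx⟩ := hmult
  exact hsNormSq_adjoint_le_of_hyponormal_general b A hA x hx B hB X
end

section
/- Let (Ω, d) be a separable metric space equipped with a finite Borel measure μ, let p > 0, and suppose the p-dimensional Hausdorff measure m_p(Ω) is finite. Let H be a complex Hilbert space, C ≥ 0, and let T : L²(Ω, μ) → H be a bounded linear operator such that ‖T ∘ P(α)‖² ≤ C (diam α)^p for every Borel set α ⊆ Ω, where P(α) denotes the operator of multiplication by the indicator function of α on L²(Ω, μ). Then T is a Hilbert–Schmidt operator and ‖T‖₂² ≤ C · m_p(Ω). -/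
open MeasureTheory ContinuousLinearMap
open scoped ENNReal NNReal

/-!
Cover `Ω` by countably many closed sets of diameter at most `r` with `∑ diam ^ p ≤ m_p(Ω) + r`, and
disjointify the cover into Borel pieces `A j`. The indicators of the pieces are orthogonal in `L²`;
if `Q` projects onto their closed span, then
`‖T ∘ Q‖₂² = ∑ ‖T 1_{A j}‖² / ‖1_{A j}‖² ≤ C ∑ (diam A j) ^ p ≤ C (m_p(Ω) + r)`.
As `r → 0`, step functions on the pieces approximate every bounded continuous function, so `Q → 1`
strongly, and the Hilbert–Schmidt norm is lower semicontinuous for strong convergence.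
-/

open Filter Topology Metric
open scoped InnerProductSpace

section Projection

variable {𝕜 E ι κ : Type*} [RCLike 𝕜] [NormedAddCommGroup E] [InnerProductSpace 𝕜 E]
  {V : κ → Submodule 𝕜 E} [∀ j, FiniteDimensional 𝕜 (V j)]

theorem starProjection_finsetSup_apply (hV : Pairwise fun j k => V j ⟂ V k) (s : Finset κ) (x : E) :
    (s.sup V).starProjection x = ∑ j ∈ s, (V j).starProjection x := by
  refine Submodule.eq_starProjection_of_mem_orthogonal
    (Submodule.sum_mem _ fun j hj => Finset.le_sup (f := V) hj
      ((V j).starProjection_apply_mem x)) ?_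
  suffices s.sup V ≤ (𝕜 ∙ (x - ∑ j ∈ s, (V j).starProjection x))ᗮ from
    fun y hy => Submodule.mem_orthogonal_singleton_iff_inner_left.1 (this hy)
  refine Finset.sup_le fun k hk y hy => Submodule.mem_orthogonal_singleton_iff_inner_left.2 ?_
  have off_diagonal : ∀ j ∈ s, j ≠ k → ⟪y, (V j).starProjection x⟫_𝕜 = 0 := fun j _ hjk =>
    (hV hjk.symm).inner_eq hy ((V j).starProjection_apply_mem x)
  rw [inner_sub_right, inner_sum, Finset.sum_eq_single_of_mem k hk off_diagonal,
    ← inner_sub_right]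
  exact (V k).sub_starProjection_mem_orthogonal x y hy

theorem hasSum_starProjection [CompleteSpace E] (hV : Pairwise fun j k => V j ⟂ V k) (x : E) :
    HasSum (fun j => (V j).starProjection x) ((⨆ j, V j).topologicalClosure.starProjection x) := by
  have mono : Monotone fun s : Finset κ => s.sup V := fun s t hst => Finset.sup_mono hst
  have iSup_sup : ⨆ s : Finset κ, s.sup V = ⨆ j, V j := by
    simp only [Finset.sup_eq_iSup, ← iSup_eq_iSup_finset V]
  have tendsto_sup := Submodule.starProjection_tendsto_closure_iSup _ mono x
  rw [iSup_sup] at tendsto_sup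
  simp only [starProjection_finsetSup_apply hV] at tendsto_sup
  exact tendsto_sup

variable {l : Filter ι} {K : ι → Submodule 𝕜 E} [∀ i, (K i).HasOrthogonalProjection]

theorem tendsto_starProjection_of_tendsto_mem {u : ι → E} {x : E} (hu : ∀ i, u i ∈ K i)
    (hux : Tendsto u l (𝓝 x)) : Tendsto (fun i => (K i).starProjection x) l (𝓝 x) := by
  rw [tendsto_iff_norm_sub_tendsto_zero] at hux ⊢
  refine squeeze_zero (fun _ => norm_nonneg _) (fun i => ?_) hux
  rw [norm_sub_rev, norm_sub_rev (u i), Submodule.starProjection_minimal]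
  exact ciInf_le ⟨0, Set.forall_mem_range.2 fun _ => norm_nonneg _⟩ (⟨u i, hu i⟩ : K i)

variable (l K) in
theorem isClosed_setOf_tendsto_starProjection :
    IsClosed {x | Tendsto (fun i => (K i).starProjection x) l (𝓝 x)} :=
  (LipschitzWith.uniformEquicontinuous _ 1 fun i =>
    (K i).lipschitzWith_starProjection).equicontinuous.isClosed_setOfPred_tendsto continuous_id

end Projection

theorem hasSum_norm_sq_sum_inner_smul {𝕜 E F ι κ : Type*} [RCLike 𝕜] [NormedAddCommGroup E]
    [InnerProductSpace 𝕜 E] [NormedAddCommGroup F] [InnerProductSpace 𝕜 F] (b : HilbertBasis ι 𝕜 E)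
    {v : κ → E} (hv : Pairwise fun j k => ⟪v j, v k⟫_𝕜 = 0) (s : Finset κ) (w : κ → F) :
    HasSum (fun i => ‖∑ j ∈ s, ⟪v j, b i⟫_𝕜 • w j‖ ^ 2) (∑ j ∈ s, ‖v j‖ ^ 2 * ‖w j‖ ^ 2) := by
  have expand (i : ι) : ((‖∑ j ∈ s, ⟪v j, b i⟫_𝕜 • w j‖ ^ 2 : ℝ) : 𝕜) =
      ∑ j ∈ s, ∑ k ∈ s, ⟪v k, b i⟫_𝕜 * ⟪b i, v j⟫_𝕜 * ⟪w j, w k⟫_𝕜 := by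
    rw [RCLike.ofReal_pow, ← inner_self_eq_norm_sq_to_K, sum_inner]
    simp only [inner_sum, inner_smul_left, inner_smul_right, inner_conj_symm]
    exact Finset.sum_congr rfl fun j _ => Finset.sum_congr rfl fun k _ => by ring
  have diagonal (j : κ) (hj : j ∈ s) : ∑ k ∈ s, ⟪v k, v j⟫_𝕜 * ⟪w j, w k⟫_𝕜 =
      ((‖v j‖ ^ 2 * ‖w j‖ ^ 2 : ℝ) : 𝕜) := by
    rw [Finset.sum_eq_single_of_mem j hj fun k _ hkj => by rw [hv hkj, zero_mul]]
    simp [inner_self_eq_norm_sq_to_K]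
  rw [← RCLike.hasSum_ofReal 𝕜, RCLike.ofReal_sum, ← Finset.sum_congr rfl diagonal]
  simp only [expand]
  exact hasSum_sum fun j _ => hasSum_sum fun k _ => (b.hasSum_inner_mul_inner _ _).mul_right _

section HilbertSchmidt

variable {E F : Type*} [NormedAddCommGroup E] [InnerProductSpace ℂ E]
  [NormedAddCommGroup F] [InnerProductSpace ℂ F] {ι κ : Type*} (b : HilbertBasis ι ℂ E)

theorem hsNormSq_le_of_tendsto {l : Filter κ} [l.NeBot] {S : κ → E →L[ℂ] F} {T : E →L[ℂ] F}
    {M : κ → ℝ≥0∞} {m : ℝ≥0∞} (hS : ∀ x, Tendsto (S · x) l (𝓝 (T x)))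
    (hM : Tendsto M l (𝓝 m)) (hSM : ∀ k, hsNormSq b (S k) ≤ M k) :
    hsNormSq b T ≤ m := by
  rw [hsNormSq, ENNReal.tsum_eq_iSup_sum]
  refine iSup_le fun s => le_of_tendsto_of_tendsto' (tendsto_finsetSum s fun i _ => ?_) hM
    fun k => (ENNReal.sum_le_tsum s).trans (hSM k)
  exact ((ENNReal.continuous_pow 2).tendsto _).comp (hS (b i)).enorm

theorem hsNormSq_sum_rankOne {v : κ → E} (hv : Pairwise fun j k => ⟪v j, v k⟫_ℂ = 0)
    (s : Finset κ) (w : κ → F) :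
    hsNormSq b (∑ j ∈ s, InnerProductSpace.rankOne ℂ (w j) (v j)) =
      ∑ j ∈ s, ‖v j‖ₑ ^ 2 * ‖w j‖ₑ ^ 2 := by
  have real_sum := hasSum_norm_sq_sum_inner_smul b hv s w
  have enorm_sum := ENNReal.ofReal_tsum_of_nonneg (fun i => sq_nonneg _) real_sum.summable
  rw [real_sum.tsum_eq, ENNReal.ofReal_sum_of_nonneg fun _ _ => by positivity] at enorm_sum
  simp only [ENNReal.ofReal_mul (sq_nonneg _), ENNReal.ofReal_pow (norm_nonneg _),
    ofReal_norm] at enorm_sum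
  simp only [hsNormSq, sum_apply, InnerProductSpace.rankOne_apply]
  exact enorm_sum.symm

theorem hsNormSq_comp_starProjection_le [CompleteSpace E] {v : κ → E}
    (hv : Pairwise fun j k => ⟪v j, v k⟫_ℂ = 0) (T : E →L[ℂ] F) :
    hsNormSq b (T ∘L (⨆ j, ℂ ∙ v j).topologicalClosure.starProjection) ≤
      ∑' j, ‖T (v j)‖ₑ ^ 2 / ‖v j‖ₑ ^ 2 := by
  let w (j : κ) : F := (((‖v j‖ ^ 2 : ℝ) : ℂ)⁻¹) • T (v j)
  have ortho : Pairwise fun j k => (ℂ ∙ v j) ⟂ (ℂ ∙ v k) := fun j k hjk => by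
    simpa [Submodule.isOrtho_span] using hv hjk
  have partial_sum (s : Finset κ) (x : E) :
      (∑ j ∈ s, InnerProductSpace.rankOne ℂ (w j) (v j)) x =
        ∑ j ∈ s, T ((ℂ ∙ v j).starProjection x) := by
    rw [sum_apply]
    refine Finset.sum_congr rfl fun j _ => ?_
    rw [InnerProductSpace.rankOne_apply, Submodule.starProjection_singleton, map_smul, smul_smul,
      div_eq_mul_inv]
    rfl
  have weight (j : κ) : ‖v j‖ₑ ^ 2 * ‖w j‖ₑ ^ 2 = ‖T (v j)‖ₑ ^ 2 / ‖v j‖ₑ ^ 2 := by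
    rcases eq_or_ne (v j) 0 with hj | hj
    · simp [w, hj]
    have norm_w : ‖w j‖ₑ = (‖v j‖ₑ ^ 2)⁻¹ * ‖T (v j)‖ₑ := by
      rw [enorm_smul, enorm_inv (by simpa using hj), Complex.ofReal_pow, enorm_pow]
      simp [enorm]
    have hne : ‖v j‖ₑ ^ 2 ≠ 0 := by simpa using hj
    rw [norm_w, mul_pow, sq (‖v j‖ₑ ^ 2)⁻¹, ← mul_assoc, ← mul_assoc,
      ENNReal.mul_inv_cancel hne (by finiteness), one_mul, mul_comm, div_eq_mul_inv]
  refine hsNormSq_le_of_tendsto b (l := atTop) (fun x => ?_) ENNReal.summable.hasSum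
    fun s => (hsNormSq_sum_rankOne b hv s w).trans_le
      (Finset.sum_congr rfl fun j _ => weight j).le
  simp only [partial_sum]
  exact (hasSum_starProjection ortho x).mapL T

end HilbertSchmidt

theorem tendsto_toLp_of_tendsto_ae_of_bound {Ω E : Type*} [MeasurableSpace Ω] {μ : Measure Ω}
    [IsFiniteMeasure μ] [NormedAddCommGroup E] {q : ℝ≥0∞} [Fact (1 ≤ q)] (hq : q ≠ ⊤)
    {f : ℕ → Ω → E} {g : Ω → E} {M : ℝ} (hf : ∀ n, MemLp (f n) q μ) (hg : MemLp g q μ)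
    (hM : ∀ n x, ‖f n x‖ ≤ M) (hfg : ∀ᵐ x ∂μ, Tendsto (f · x) atTop (𝓝 (g x))) :
    Tendsto (fun n => (hf n).toLp) atTop (𝓝 hg.toLp) := by
  rw [Lp.tendsto_Lp_iff_tendsto_eLpNorm'']
  refine tendsto_Lp_finite_of_tendsto_ae Fact.out hq (fun n => (hf n).1) hg
    (unifIntegrable_of Fact.out hq (fun n => (hf n).1) fun ε _ => ⟨(M + 1).toNNReal, fun n => ?_⟩)
    hfg
  have no_large_values : {x | (M + 1).toNNReal ≤ ‖f n x‖₊} = ∅ := by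
    refine Set.eq_empty_of_forall_notMem fun x hx => ?_
    have le_norm : M + 1 ≤ ‖f n x‖ := Real.toNNReal_le_iff_le_coe.1 hx
    linarith [hM n x]
  simp [no_large_values]

theorem enorm_indicatorConstLp_one_sq {Ω 𝕜 : Type*} [MeasurableSpace Ω] {μ : Measure Ω}
    [RCLike 𝕜] {s : Set Ω} (hs : MeasurableSet s) (hμs : μ s ≠ ⊤) :
    ‖indicatorConstLp 2 hs hμs (1 : 𝕜)‖ₑ ^ 2 = μ s := by
  rw [Lp.enorm_def, eLpNorm_congr_ae indicatorConstLp_coeFn,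
    eLpNorm_indicator_const hs two_ne_zero ENNReal.ofNat_ne_top, enorm_one, one_mul,
    ← ENNReal.rpow_natCast, ← ENNReal.rpow_mul]
  norm_num

section FiberConstant

variable {Ω κ : Type*} [MeasurableSpace Ω] [MeasurableSpace κ] [MeasurableSingletonClass κ]
  {N : Ω → κ} {𝕜 : Type*} [RCLike 𝕜] {μ : Measure Ω} [IsFiniteMeasure μ]

variable (𝕜 μ) in
/-- The indicator function of the fibre `N ⁻¹' {j}`, as an element of `L²(μ)`: the step from which
the functions factoring through `N` are built. The fibres of `N` encode a partition of `Ω`. -/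
noncomputable def fiberIndicator (hN : Measurable N) (j : κ) : Lp 𝕜 2 μ :=
  indicatorConstLp 2 (hN (measurableSet_singleton j)) (measure_ne_top μ _) 1

variable (𝕜 μ) in
/-- The closed subspace of `L²(μ)` spanned by the indicators of the fibres of `N`; for countable `κ`
it consists of the square integrable functions that are constant on each fibre. -/
noncomputable abbrev fiberConstSubspace (hN : Measurable N) : Submodule 𝕜 (Lp 𝕜 2 μ) :=
  (⨆ j, 𝕜 ∙ fiberIndicator 𝕜 μ hN j).topologicalClosure

theorem pairwise_inner_fiberIndicator_eq_zero (hN : Measurable N) :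
    Pairwise fun j k => ⟪fiberIndicator 𝕜 μ hN j, fiberIndicator 𝕜 μ hN k⟫_𝕜 = 0 := by
  intro j k hjk
  have disjoint_fibers : N ⁻¹' {j} ∩ N ⁻¹' {k} = ∅ :=
    ((Set.disjoint_singleton.2 hjk).preimage N).inter_eq
  rw [fiberIndicator, fiberIndicator, L2.inner_indicatorConstLp_one_indicatorConstLp_one,
    disjoint_fibers, measureReal_empty, RCLike.ofReal_zero]

theorem toLp_comp_mem_fiberConstSubspace [Countable κ] (hN : Measurable N) {c : κ → 𝕜}
    (hc : MemLp (c ∘ N) 2 μ) : hc.toLp ∈ fiberConstSubspace 𝕜 μ hN := by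
  rw [fiberConstSubspace, ← Submodule.orthogonal_orthogonal_eq_closure,
    Submodule.mem_orthogonal']
  intro g hg
  have integral_fiber (j : κ) : ∫ x in N ⁻¹' {j}, g x ∂μ = 0 := by
    rw [← L2.inner_indicatorConstLp_one (𝕜 := 𝕜) (hN (measurableSet_singleton j))
      (measure_ne_top μ _)]
    exact hg _ (Submodule.mem_iSup_of_mem j (Submodule.mem_span_singleton_self _))
  have g_integrable : Integrable g μ := (Lp.memLp g).integrable one_le_two
  have inner_integrable : Integrable (fun x => ⟪c (N x), g x⟫_𝕜) μ :=
    (L2.integrable_inner hc.toLp g).congr (hc.coeFn_toLp.mono fun x hx => by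
      simp only [hx, Function.comp_apply])
  calc ⟪hc.toLp, g⟫_𝕜 = ∫ x, ⟪c (N x), g x⟫_𝕜 ∂μ := by
        rw [L2.inner_def]
        exact integral_congr_ae (hc.coeFn_toLp.mono fun x hx => by
          simp only [hx, Function.comp_apply])
    _ = ∑' j, ∫ x in N ⁻¹' {j}, ⟪c (N x), g x⟫_𝕜 ∂μ := by
        rw [← integral_iUnion (fun j => hN (measurableSet_singleton j))
          (pairwise_disjoint_fiber N) inner_integrable.integrableOn,
          ← Set.preimage_iUnion, Set.iUnion_of_singleton, Set.preimage_univ, setIntegral_univ]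
    _ = ∑' j, ⟪c j, ∫ x in N ⁻¹' {j}, g x ∂μ⟫_𝕜 := by
        refine tsum_congr fun j => ?_
        rw [← integral_inner g_integrable.integrableOn]
        exact setIntegral_congr_fun (hN (measurableSet_singleton j)) fun x hx => by
          simp only [hx.symm]
    _ = 0 := by simp only [integral_fiber, inner_zero_right, tsum_zero]

end FiberConstant

theorem tendsto_invFun_of_tendsto_ediam_fiber {Ω ι κ : Type*} [PseudoEMetricSpace Ω]
    [Nonempty Ω] {l : Filter ι} {N : ι → Ω → κ} {r : ι → ℝ≥0∞} (hr : Tendsto r l (𝓝 0))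
    (hNr : ∀ n j, ediam (N n ⁻¹' {j}) ≤ r n) (x : Ω) :
    Tendsto (fun n => Function.invFun (N n) (N n x)) l (𝓝 x) := by
  rw [tendsto_iff_edist_tendsto_0]
  have mem_fiber (n : ι) : Function.invFun (N n) (N n x) ∈ N n ⁻¹' {N n x} :=
    Function.invFun_eq ⟨x, rfl⟩
  exact tendsto_of_tendsto_of_tendsto_of_le_of_le tendsto_const_nhds hr (fun _ => zero_le)
    fun n => (edist_le_ediam_of_mem (mem_fiber n) (Set.mem_singleton _)).trans (hNr n (N n x))

section Approximation

variable {Ω κ : Type*} [EMetricSpace Ω] [MeasurableSpace Ω] [BorelSpace Ω] [MeasurableSpace κ]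
  [MeasurableSingletonClass κ] [Countable κ] {N : ℕ → Ω → κ} {𝕜 : Type*} [RCLike 𝕜]
  {μ : Measure Ω} [IsFiniteMeasure μ]

open scoped BoundedContinuousFunction

theorem exists_tendsto_mem_fiberConstSubspace {r : ℕ → ℝ≥0∞} (hN : ∀ n, Measurable (N n))
    (hr : Tendsto r atTop (𝓝 0)) (hNr : ∀ n j, ediam (N n ⁻¹' {j}) ≤ r n) (f : Ω →ᵇ 𝕜) :
    ∃ u : ℕ → Lp 𝕜 2 μ, (∀ n, u n ∈ fiberConstSubspace 𝕜 μ (hN n)) ∧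
      Tendsto u atTop (𝓝 (BoundedContinuousFunction.toLp 2 μ 𝕜 f)) := by
  rcases isEmpty_or_nonempty Ω with _ | _
  · obtain rfl : f = 0 := BoundedContinuousFunction.ext isEmptyElim
    exact ⟨fun _ => 0, fun n => zero_mem _, by simp⟩
  let c (n : ℕ) (j : κ) : 𝕜 := f (Function.invFun (N n) j)
  have hc (n : ℕ) : MemLp (c n ∘ N n) 2 μ :=
    MemLp.of_bound ((measurable_of_countable (c n)).comp (hN n)).aestronglyMeasurable ‖f‖
      (ae_of_all μ fun x => f.norm_coe_le_norm _)
  have hf : MemLp f 2 μ :=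
    MemLp.of_bound f.continuous.aestronglyMeasurable ‖f‖ (ae_of_all μ f.norm_coe_le_norm)
  refine ⟨fun n => (hc n).toLp, fun n => toLp_comp_mem_fiberConstSubspace (hN n) (hc n), ?_⟩
  refine tendsto_toLp_of_tendsto_ae_of_bound ENNReal.ofNat_ne_top hc hf
    (fun n x => f.norm_coe_le_norm _) (ae_of_all μ fun x => ?_)
  exact (f.continuous.tendsto x).comp (tendsto_invFun_of_tendsto_ediam_fiber hr hNr x)

theorem tendsto_starProjection_fiberConstSubspace {r : ℕ → ℝ≥0∞} (hN : ∀ n, Measurable (N n))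
    (hr : Tendsto r atTop (𝓝 0)) (hNr : ∀ n j, ediam (N n ⁻¹' {j}) ≤ r n) (x : Lp 𝕜 2 μ) :
    Tendsto (fun n => (fiberConstSubspace 𝕜 μ (hN n)).starProjection x) atTop (𝓝 x) := by
  refine (BoundedContinuousFunction.toLp_denseRange 𝕜 μ (p := 2) 𝕜
    ENNReal.ofNat_ne_top).induction_on x
    (isClosed_setOf_tendsto_starProjection atTop _) fun f => ?_
  obtain ⟨u, hu, hux⟩ := exists_tendsto_mem_fiberConstSubspace (μ := μ) hN hr hNr f
  exact tendsto_starProjection_of_tendsto_mem hu hux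

end Approximation

section Partition

theorem exists_measurable_fiber_subset_closure {X : Type*} [TopologicalSpace X]
    [MeasurableSpace X] [OpensMeasurableSpace X] {t : ℕ → Set X} (ht : Set.univ ⊆ ⋃ j, t j) :
    ∃ N : X → ℕ, Measurable N ∧ ∀ j, N ⁻¹' {j} ⊆ closure (t j) := by
  classical
  have covered (x : X) : ∃ j, x ∈ closure (t j) :=
    (Set.mem_iUnion.1 (ht (Set.mem_univ x))).imp fun _ hj => subset_closure hj
  refine ⟨fun x => Nat.find (covered x),
    measurable_find covered fun j => isClosed_closure.measurableSet, ?_⟩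
  rintro j x rfl
  exact Nat.find_spec (covered x)

theorem exists_cover_ediam_le {X : Type*} [PseudoEMetricSpace X]
    [TopologicalSpace.SeparableSpace X] {r : ℝ≥0∞} (hr : 0 < r) :
    ∃ t : ℕ → Set X, Set.univ ⊆ ⋃ j, t j ∧ ∀ j, ediam (t j) ≤ r := by
  rcases isEmpty_or_nonempty X with _ | _
  · exact ⟨fun _ => ∅, fun x => isEmptyElim x, by simp⟩
  obtain ⟨u, hu⟩ := TopologicalSpace.exists_dense_seq X
  refine ⟨fun j => eball (u j) (r / 2), fun x _ => ?_, fun j => ?_⟩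
  · obtain ⟨_, hy, j, rfl⟩ := EMetric.dense_iff.1 hu x (r / 2) (ENNReal.half_pos hr.ne')
    exact Set.mem_iUnion.2 ⟨j, mem_eball_comm.1 hy⟩
  · exact ediam_eball_le.trans_eq (ENNReal.mul_div_cancel two_ne_zero ENNReal.ofNat_ne_top)

variable {X : Type*} [EMetricSpace X] [TopologicalSpace.SeparableSpace X] [MeasurableSpace X]
  [BorelSpace X]

theorem exists_cover_tsum_ediam_rpow_le (p : ℝ) {r ε : ℝ≥0∞} (hr : 0 < r) (hε : 0 < ε) :
    ∃ t : ℕ → Set X, Set.univ ⊆ ⋃ j, t j ∧ (∀ j, ediam (t j) ≤ r) ∧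
      ∑' j, ⨆ _ : (t j).Nonempty, ediam (t j) ^ p ≤ μH[p] (Set.univ : Set X) + ε := by
  rcases eq_or_ne (μH[p] (Set.univ : Set X)) ⊤ with htop | hfin
  · obtain ⟨t, cover, ht⟩ := exists_cover_ediam_le (X := X) hr
    exact ⟨t, cover, ht, by simp [htop]⟩
  have lt_add : ⨅ (t : ℕ → Set X) (_ : Set.univ ⊆ ⋃ j, t j) (_ : ∀ j, ediam (t j) ≤ r),
      ∑' j, ⨆ _ : (t j).Nonempty, ediam (t j) ^ p < μH[p] (Set.univ : Set X) + ε := by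
    refine lt_of_le_of_lt ?_ (ENNReal.lt_add_right hfin hε.ne')
    rw [Measure.hausdorffMeasure_apply]
    exact le_iSup₂_of_le r hr le_rfl
  simp only [iInf_lt_iff] at lt_add
  obtain ⟨t, cover, ht, sum_lt⟩ := lt_add
  exact ⟨t, cover, ht, sum_lt.le⟩

theorem exists_measurable_tsum_ediam_fiber_rpow_le {p : ℝ} (hp : 0 ≤ p) {r ε : ℝ≥0∞}
    (hr : 0 < r) (hε : 0 < ε) :
    ∃ N : X → ℕ, Measurable N ∧ (∀ j, ediam (N ⁻¹' {j}) ≤ r) ∧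
      ∑' j, ⨆ _ : (N ⁻¹' {j}).Nonempty, ediam (N ⁻¹' {j}) ^ p ≤
        μH[p] (Set.univ : Set X) + ε := by
  obtain ⟨t, cover, ht, sum_le⟩ := exists_cover_tsum_ediam_rpow_le (X := X) p hr hε
  obtain ⟨N, hN, hNt⟩ := exists_measurable_fiber_subset_closure cover
  have ediam_fiber_le (j : ℕ) : ediam (N ⁻¹' {j}) ≤ ediam (t j) :=
    (ediam_mono (hNt j)).trans_eq (ediam_closure _)
  refine ⟨N, hN, fun j => (ediam_fiber_le j).trans (ht j), le_trans ?_ sum_le⟩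
  refine ENNReal.tsum_le_tsum fun j => iSup_le fun fiber_nonempty => ?_
  exact le_iSup_of_le (closure_nonempty_iff.1 (fiber_nonempty.mono (hNt j)))
    (ENNReal.rpow_le_rpow (ediam_fiber_le j) hp)

end Partition

theorem hsNormSq_comp_starProjection_fiberConstSubspace_le {Ω κ ι F : Type*} [MeasurableSpace Ω]
    [MeasurableSpace κ] [MeasurableSingletonClass κ] {N : Ω → κ} {μ : Measure Ω}
    [IsFiniteMeasure μ] [NormedAddCommGroup F] [InnerProductSpace ℂ F] (hN : Measurable N)
    {T : Lp ℂ 2 μ →L[ℂ] F} {a : κ → ℝ≥0∞}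
    (hT : ∀ j, ‖T (fiberIndicator ℂ μ hN j)‖ₑ ^ 2 ≤ a j * μ (N ⁻¹' {j}))
    (b : HilbertBasis ι ℂ (Lp ℂ 2 μ)) :
    hsNormSq b (T ∘L (fiberConstSubspace ℂ μ hN).starProjection) ≤ ∑' j, a j := by
  refine (hsNormSq_comp_starProjection_le b (pairwise_inner_fiberIndicator_eq_zero hN) T).trans
    (ENNReal.tsum_le_tsum fun j => ENNReal.div_le_of_le_mul ?_)
  rw [fiberIndicator, enorm_indicatorConstLp_one_sq]
  exact hT j

theorem apply_indicatorConstLp_eq_self {Ω 𝕜 : Type*} [MeasurableSpace Ω] [RCLike 𝕜]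
    {μ : Measure Ω} {q : ℝ≥0∞} {α : Set Ω} (hα : MeasurableSet α) (hμα : μ α ≠ ⊤) (c : 𝕜)
    {P : Lp 𝕜 q μ → Lp 𝕜 q μ}
    (hP : ∀ f : Lp 𝕜 q μ, ⇑(P f) =ᵐ[μ] fun ω => α.indicator (fun _ => (1 : 𝕜)) ω * f ω) :
    P (indicatorConstLp q hα hμα c) = indicatorConstLp q hα hμα c := by
  refine Lp.ext ?_
  filter_upwards [hP (indicatorConstLp q hα hμα c),
    indicatorConstLp_coeFn (p := q) (hs := hα) (hμs := hμα) (c := c)] with ω apply_eq indicator_eq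
  rw [apply_eq, indicator_eq, ← Set.indicator_mul_left]
  simp [Set.indicator_indicator]

theorem ofReal_diam_rpow_le_ediam_rpow {X : Type*} [PseudoMetricSpace X] (s : Set X) {p : ℝ}
    (hp : 0 ≤ p) : ENNReal.ofReal (diam s ^ p) ≤ ediam s ^ p := by
  rw [← ENNReal.ofReal_rpow_of_nonneg diam_nonneg hp]
  exact ENNReal.rpow_le_rpow ENNReal.ofReal_toReal_le hp

theorem enorm_apply_sq_le_of_norm_comp_sq_le {𝕜 E F : Type*} [NontriviallyNormedField 𝕜]
    [SeminormedAddCommGroup E] [NormedSpace 𝕜 E] [SeminormedAddCommGroup F] [NormedSpace 𝕜 F]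
    {T : E →L[𝕜] F} {P : E →L[𝕜] E} {x : E} {c : ℝ} (hTP : ‖T ∘L P‖ ^ 2 ≤ c) (hx : P x = x) :
    ‖T x‖ₑ ^ 2 ≤ ENNReal.ofReal c * ‖x‖ₑ ^ 2 := by
  have norm_sq_le : ‖T x‖ ^ 2 ≤ c * ‖x‖ ^ 2 := by
    calc ‖T x‖ ^ 2 = ‖(T ∘L P) x‖ ^ 2 := by rw [comp_apply, hx]
      _ ≤ (‖T ∘L P‖ * ‖x‖) ^ 2 := by gcongr; exact le_opNorm _ _
      _ = ‖T ∘L P‖ ^ 2 * ‖x‖ ^ 2 := mul_pow ..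
      _ ≤ c * ‖x‖ ^ 2 := by gcongr
  simpa [ENNReal.ofReal_mul' (sq_nonneg _), ENNReal.ofReal_pow] using
    ENNReal.ofReal_le_ofReal norm_sq_le

theorem enorm_apply_indicatorConstLp_sq_le {Ω : Type*} [PseudoMetricSpace Ω] [MeasurableSpace Ω]
    {μ : Measure Ω} [IsFiniteMeasure μ] {p : ℝ} (hp : 0 ≤ p) {H : Type*} [NormedAddCommGroup H]
    [NormedSpace ℂ H] {C : ℝ} {T : Lp ℂ 2 μ →L[ℂ] H} {P : Lp ℂ 2 μ →L[ℂ] Lp ℂ 2 μ}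
    {α : Set Ω} (hα : MeasurableSet α)
    (hP : ∀ f : Lp ℂ 2 μ, ⇑(P f) =ᵐ[μ] fun ω => α.indicator (fun _ => (1 : ℂ)) ω * f ω)
    (hTP : ‖T ∘L P‖ ^ 2 ≤ C * diam α ^ p) :
    ‖T (indicatorConstLp 2 hα (measure_ne_top μ α) 1)‖ₑ ^ 2 ≤
      ENNReal.ofReal C * ediam α ^ p * μ α := by
  refine (enorm_apply_sq_le_of_norm_comp_sq_le hTP
    (apply_indicatorConstLp_eq_self hα (measure_ne_top μ α) 1 hP)).trans ?_
  rw [enorm_indicatorConstLp_one_sq, ENNReal.ofReal_mul' (Real.rpow_nonneg diam_nonneg p)]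
  gcongr
  exact ofReal_diam_rpow_le_ediam_rpow α hp

theorem hilbertSchmidt_of_diam_bound_general {Ω : Type*} [EMetricSpace Ω]
    [TopologicalSpace.SeparableSpace Ω] [MeasurableSpace Ω] [BorelSpace Ω] {μ : Measure Ω}
    [IsFiniteMeasure μ] {p : ℝ} (hp : 0 ≤ p) {H : Type*} [NormedAddCommGroup H]
    [InnerProductSpace ℂ H] {C : ℝ≥0} {T : Lp ℂ 2 μ →L[ℂ] H}
    (hT : ∀ (α : Set Ω) (hα : MeasurableSet α),
      ‖T (indicatorConstLp 2 hα (measure_ne_top μ α) 1)‖ₑ ^ 2 ≤ C * ediam α ^ p * μ α)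
    {ι : Type*} (b : HilbertBasis ι ℂ (Lp ℂ 2 μ)) :
    hsNormSq b T ≤ C * μH[p] (Set.univ : Set Ω) := by
  obtain ⟨ε, -, ε_mem, ε_lim⟩ := exists_seq_strictAnti_tendsto' (zero_lt_one (α := ℝ≥0∞))
  choose N hN ediam_le tsum_le using fun n =>
    exists_measurable_tsum_ediam_fiber_rpow_le (X := Ω) hp (ε_mem n).1 (ε_mem n).1
  have weight_le (n j : ℕ) : ‖T (fiberIndicator ℂ μ (hN n) j)‖ₑ ^ 2 ≤
      (C * ⨆ _ : (N n ⁻¹' {j}).Nonempty, ediam (N n ⁻¹' {j}) ^ p) * μ (N n ⁻¹' {j}) := by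
    refine (hT _ (hN n (measurableSet_singleton j))).trans ?_
    rcases (N n ⁻¹' {j}).eq_empty_or_nonempty with fiber_empty | fiber_nonempty
    · simp [fiber_empty]
    · simp [fiber_nonempty]
  have bound_lim : Tendsto (fun n => C * (μH[p] (Set.univ : Set Ω) + ε n)) atTop
      (𝓝 (C * μH[p] (Set.univ : Set Ω))) := by
    simpa using ENNReal.Tendsto.const_mul (ε_lim.const_add _) (Or.inr ENNReal.coe_ne_top)
  refine hsNormSq_le_of_tendsto b (l := atTop)
    (S := fun n => T ∘L (fiberConstSubspace ℂ μ (hN n)).starProjection)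
    (fun x => (T.continuous.tendsto x).comp
      (tendsto_starProjection_fiberConstSubspace hN ε_lim ediam_le x)) bound_lim fun n => ?_
  refine (hsNormSq_comp_starProjection_fiberConstSubspace_le (hN n) (weight_le n) b).trans ?_
  rw [ENNReal.tsum_mul_left]
  gcongr
  exact tsum_le n

/-- Let `(Ω, d)` be a separable metric space with a finite Borel measure `μ` and finite
`p`-dimensional Hausdorff measure. If `T : L²(Ω, μ) → H` satisfies
`‖T ∘ P(α)‖² ≤ C (diam α)^p` for every Borel set `α` (`P(α)` being multiplication by the
indicator of `α`), then `T` is Hilbert–Schmidt with `‖T‖₂² ≤ C ⬝ m_p(Ω)`. -/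
theorem hilbertSchmidt_of_diam_bound
    {Ω : Type*} [MetricSpace Ω] [SecondCountableTopology Ω]
    [MeasurableSpace Ω] [BorelSpace Ω]
    (μ : Measure Ω) [IsFiniteMeasure μ]
    (p : ℝ) (hp : 0 < p)
    (hΩ : Measure.hausdorffMeasure p (Set.univ : Set Ω) < ⊤)
    {H : Type*} [NormedAddCommGroup H] [InnerProductSpace ℂ H]
    (C : ℝ) (hC : 0 ≤ C)
    (T : Lp ℂ 2 μ →L[ℂ] H)
    (P : Set Ω → (Lp ℂ 2 μ →L[ℂ] Lp ℂ 2 μ))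
    (hP : ∀ α : Set Ω, MeasurableSet α → ∀ f : Lp ℂ 2 μ,
      ⇑(P α f) =ᵐ[μ] fun ω => α.indicator (fun _ => (1 : ℂ)) ω * f ω)
    (hTP : ∀ α : Set Ω, MeasurableSet α → ‖T ∘L P α‖ ^ 2 ≤ C * Metric.diam α ^ p)
    {ι : Type*} (b : HilbertBasis ι ℂ (Lp ℂ 2 μ)) :
    hsNormSq b T ≤
      ENNReal.ofReal C * Measure.hausdorffMeasure p (Set.univ : Set Ω) := by
  refine hilbertSchmidt_of_diam_bound_general hp.le (fun α hα => ?_) b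
  exact enorm_apply_indicatorConstLp_sq_le hp.le hα (hP α hα) (hTP α hα)
end

section
/- Let (X, μ) and (Y, ν) be standard Borel spaces with σ-finite measures, K a countable index set, and let a_k : X → ℂ, b_k : Y → ℂ be bounded measurable functions with Σ_k (sup_x |a_k(x)|)² < ∞ and Σ_k (sup_y |b_k(y)|)² < ∞. Define Δ : B(L²(X,μ), L²(Y,ν)) → B(L²(X,μ), L²(Y,ν)) by Δ(T) = Σ_{k∈K} M_{b_k} T M_{a_k} (the series converges in operator norm), where M_f denotes multiplication by f. Assume there is a set D ⊆ ℓ²(K) of finite two-dimensional Hausdorff measure such that (a_k(x))_{k∈K} ∈ D for μ-almost every x ∈ X (the left coefficient family has essential dimension at most 2). Then for every T ∈ B(L²(X,μ), L²(Y,ν)): lim_{n→∞} ‖Δⁿ(T)‖^{1/n} = 0 if and only if Δ(T) = 0. (That is, the 0-spectral subspace ℰ_Δ(0) coincides with ker Δ.) -/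
open MeasureTheory Filter ContinuousLinearMap
open scoped ENNReal NNReal

/-!
Let `Φ x = (a k x)ₖ ∈ ℓ²` and let `pencil B z = ∑ k, z k • B k`, a normal operator. On functions
supported where `Φ` is within `r` of `z`, `Δ` is within `‖B‖ r` of left multiplication by
`pencil B z`. Since `‖N e‖ ^ n * ‖e‖ ≤ ‖e‖ ^ n * ‖N ^ n e‖` for normal `N`, it follows that
`‖pencil B z (T f)‖ ≤ ‖B‖ r ‖T f‖` for such `f` whenever `‖Δⁿ T‖ ^ (1 / n) → 0`.

Cut a set `G` of finite measure into cells on which `Φ` varies by `r i ≤ δ` with `∑ r i ^ 2 ≤ C`,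
and let `t` and `q` in `L²(μ; E)` be the cellwise averages of the virtual kernels of `T` and `Δ T`.
Each cell contributes `O(r i)` to `q`, so `q` stays bounded as `δ → 0`: this is where dimension two
enters. For the normal operator `N` of multiplication by `x ↦ pencil B (Φ x)` one also has
`N q → 0` and `q - N t → 0` weakly. The first forces weak limits of `q` into `ker N`, the second
makes them orthogonal to it. So `q → 0` weakly, which says that `Δ T` vanishes on the indicator
function of `G`.
-/

section SpectralSubspace

variable {V V' : Type*} [SeminormedAddCommGroup V] [SeminormedAddCommGroup V']

/-- The spectral subspace of `Δ` at `0`: the vectors `T` with `‖Δⁿ T‖ ^ (1 / n) → 0`. It is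
defined for an arbitrary self-map; the term `n = 0` has the junk exponent `1 / 0 = 0`. -/
def zeroSpectralSubspace (Δ : V → V) : Set V :=
  {T | Tendsto (fun n : ℕ => ‖Δ^[n] T‖ ^ ((1 : ℝ) / n)) atTop (nhds 0)}

variable {Δ : V → V} {Δ' : V' → V'} {T : V}

lemma mem_zeroSpectralSubspace_of_apply_eq_zero (hΔ : Δ 0 = 0) (hT : Δ T = 0) :
    T ∈ zeroSpectralSubspace Δ := by
  refine tendsto_const_nhds.congr' ?_
  filter_upwards [eventually_ge_atTop 1] with n hn
  obtain ⟨m, rfl⟩ := Nat.exists_eq_add_of_le' hn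
  rw [Function.iterate_succ_apply, hT, Function.iterate_fixed hΔ, norm_zero,
    Real.zero_rpow (by positivity)]

lemma exists_norm_iterate_le_of_mem_zeroSpectralSubspace (hT : T ∈ zeroSpectralSubspace Δ)
    {ε : ℝ} (hε : 0 < ε) : ∃ c : ℝ, ∀ n, ‖Δ^[n] T‖ ≤ c * ε ^ n := by
  have h_eventually : ∀ᶠ n : ℕ in atTop, ‖Δ^[n] T‖ ≤ ε ^ n := by
    filter_upwards [hT.eventually_lt_const hε, eventually_ne_atTop 0] with n hn hn0
    calc ‖Δ^[n] T‖ = (‖Δ^[n] T‖ ^ ((1 : ℝ) / n)) ^ n := by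
          rw [one_div, Real.rpow_inv_natCast_pow (norm_nonneg _) hn0]
      _ ≤ ε ^ n := by gcongr
  have h_isBigO : (fun n => Δ^[n] T) =O[atTop] fun n : ℕ => ε ^ n :=
    Asymptotics.IsBigO.of_bound 1 <| h_eventually.mono fun n hn => by
      rwa [one_mul, Real.norm_of_nonneg (pow_nonneg hε.le n)]
  obtain ⟨c, -, hc⟩ := Asymptotics.bound_of_isBigO_nat_atTop h_isBigO
  exact ⟨c, fun n => by simpa [abs_of_pos hε] using hc (pow_pos hε n).ne'⟩

lemma apply_mem_zeroSpectralSubspace_of_semiconj {Q : V → V'} (hQ : Function.Semiconj Q Δ Δ')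
    {C : ℝ} (hC : 0 < C) (hQC : ∀ W, ‖Q W‖ ≤ C * ‖W‖) (hT : T ∈ zeroSpectralSubspace Δ) :
    Q T ∈ zeroSpectralSubspace Δ' := by
  have h_root : Tendsto (fun n : ℕ => C ^ ((1 : ℝ) / n)) atTop (nhds 1) := by
    simpa using (tendsto_const_nhds (x := C)).rpow (tendsto_one_div_atTop_nhds_zero_nat (𝕜 := ℝ))
      (Or.inl hC.ne')
  have h_bound : Tendsto (fun n : ℕ => C ^ ((1 : ℝ) / n) * ‖Δ^[n] T‖ ^ ((1 : ℝ) / n)) atTop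
      (nhds 0) := by simpa using h_root.mul hT
  refine squeeze_zero (fun n => by positivity) (fun n => ?_) h_bound
  rw [← hQ.iterate_right n T, ← Real.mul_rpow hC.le (norm_nonneg _)]
  gcongr
  exact hQC _

lemma norm_iterate_le_of_commute_of_norm_sub_le {L : V → V} (hΔL : Function.Commute Δ L)
    {c ε κ : ℝ} (hT : ∀ i, ‖Δ^[i] T‖ ≤ c * ε ^ i)
    (hL : ∀ n i, ‖Δ (L^[n] (Δ^[i] T)) - L (L^[n] (Δ^[i] T))‖ ≤ κ * ‖L^[n] (Δ^[i] T)‖)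
    (hκ : 0 ≤ κ) (n : ℕ) : ‖L^[n] T‖ ≤ c * (ε + κ) ^ n := by
  suffices h : ∀ i, ‖L^[n] (Δ^[i] T)‖ ≤ c * ε ^ i * (ε + κ) ^ n by simpa using h 0
  induction n with
  | zero => simpa using hT
  | succ n ih =>
    intro i
    have h_shift : Δ (L^[n] (Δ^[i] T)) = L^[n] (Δ^[i + 1] T) := by
      rw [Function.iterate_succ_apply', hΔL.iterate_right n]
    calc ‖L^[n + 1] (Δ^[i] T)‖
        = ‖L^[n] (Δ^[i + 1] T) - (Δ (L^[n] (Δ^[i] T)) - L (L^[n] (Δ^[i] T)))‖ := by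
          rw [Function.iterate_succ_apply', h_shift, sub_sub_cancel]
      _ ≤ c * ε ^ (i + 1) * (ε + κ) ^ n + κ * (c * ε ^ i * (ε + κ) ^ n) :=
          (norm_sub_le _ _).trans (add_le_add (ih _) ((hL n i).trans (by gcongr; exact ih i)))
      _ = c * ε ^ i * (ε + κ) ^ (n + 1) := by ring

end SpectralSubspace

section Normal

variable {𝕜 E : Type*} [RCLike 𝕜] [NormedAddCommGroup E] [InnerProductSpace 𝕜 E] [CompleteSpace E]
  {N : E →L[𝕜] E}

lemma norm_apply_sq_le_of_isStarNormal (hN : IsStarNormal N) (v : E) :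
    ‖N v‖ ^ 2 ≤ ‖N (N v)‖ * ‖v‖ := by
  calc ‖N v‖ ^ 2 = ‖inner 𝕜 (adjoint N (N v)) v‖ := by
        rw [adjoint_inner_left, inner_self_eq_norm_sq_to_K, norm_pow, RCLike.norm_ofReal,
          abs_norm]
    _ ≤ ‖N (N v)‖ * ‖v‖ := by
        rw [isStarNormal_iff_norm_eq_adjoint.mp hN]
        exact norm_inner_le_norm _ _

lemma norm_apply_mul_norm_pow_apply_le_of_isStarNormal (hN : IsStarNormal N) (e : E) (n : ℕ) :
    ‖N e‖ * ‖(N ^ n) e‖ ≤ ‖e‖ * ‖(N ^ (n + 1)) e‖ := by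
  induction n with
  | zero => simp [mul_comm]
  | succ n ih =>
    have h_convex := norm_apply_sq_le_of_isStarNormal hN ((N ^ n) e)
    simp only [pow_succ' N, mul_apply_eq_comp] at ih h_convex ⊢
    rcases (norm_nonneg (N ((N ^ n) e))).eq_or_lt with h0 | hpos
    · rw [← h0, mul_zero]
      positivity
    · refine le_of_mul_le_mul_right ?_ hpos
      calc ‖N e‖ * ‖N ((N ^ n) e)‖ * ‖N ((N ^ n) e)‖
          = ‖N e‖ * ‖N ((N ^ n) e)‖ ^ 2 := by ring
        _ ≤ ‖N e‖ * (‖N (N ((N ^ n) e))‖ * ‖(N ^ n) e‖) := by gcongr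
        _ = ‖N (N ((N ^ n) e))‖ * (‖N e‖ * ‖(N ^ n) e‖) := by ring
        _ ≤ ‖N (N ((N ^ n) e))‖ * (‖e‖ * ‖N ((N ^ n) e)‖) := by gcongr
        _ = ‖e‖ * ‖N (N ((N ^ n) e))‖ * ‖N ((N ^ n) e)‖ := by ring

lemma norm_apply_pow_mul_norm_le_of_isStarNormal (hN : IsStarNormal N) (e : E) (n : ℕ) :
    ‖N e‖ ^ n * ‖e‖ ≤ ‖e‖ ^ n * ‖(N ^ n) e‖ := by
  induction n with
  | zero => simp
  | succ n ih =>
    calc ‖N e‖ ^ (n + 1) * ‖e‖ = ‖N e‖ * (‖N e‖ ^ n * ‖e‖) := by ring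
      _ ≤ ‖N e‖ * (‖e‖ ^ n * ‖(N ^ n) e‖) := by gcongr
      _ = ‖e‖ ^ n * (‖N e‖ * ‖(N ^ n) e‖) := by ring
      _ ≤ ‖e‖ ^ n * (‖e‖ * ‖(N ^ (n + 1)) e‖) :=
          mul_le_mul_of_nonneg_left
            (norm_apply_mul_norm_pow_apply_le_of_isStarNormal hN e n) (by positivity)
      _ = ‖e‖ ^ (n + 1) * ‖(N ^ (n + 1)) e‖ := by ring

lemma le_of_forall_pow_le_mul_pow {s t c : ℝ} (ht : 0 < t) (h : ∀ n : ℕ, s ^ n ≤ c * t ^ n) :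
    s ≤ t := by
  by_contra! hts
  obtain ⟨n, hn⟩ := pow_unbounded_of_one_lt c ((one_lt_div ht).2 hts)
  rw [div_pow, lt_div_iff₀ (pow_pos ht n)] at hn
  exact (h n).not_gt hn

lemma norm_apply_le_of_forall_norm_pow_apply_le (hN : IsStarNormal N) {e : E} {c ρ : ℝ}
    (hρ : 0 < ρ) (h : ∀ n : ℕ, ‖(N ^ n) e‖ ≤ c * ρ ^ n) : ‖N e‖ ≤ ρ * ‖e‖ := by
  rcases eq_or_ne e 0 with rfl | he
  · simp
  have he_pos : 0 < ‖e‖ := norm_pos_iff.2 he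
  refine le_of_forall_pow_le_mul_pow (c := c / ‖e‖) (mul_pos hρ he_pos) fun n => ?_
  rw [div_mul_eq_mul_div, le_div_iff₀ he_pos]
  calc ‖N e‖ ^ n * ‖e‖ ≤ ‖e‖ ^ n * ‖(N ^ n) e‖ :=
        norm_apply_pow_mul_norm_le_of_isStarNormal hN e n
    _ ≤ ‖e‖ ^ n * (c * ρ ^ n) := by gcongr; exact h n
    _ = c * (ρ * ‖e‖) ^ n := by ring

end Normal

section WeakConvergence

variable {𝕜 E : Type*} [RCLike 𝕜] [NormedAddCommGroup E] [InnerProductSpace 𝕜 E] {q : ℕ → E}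

variable (𝕜) in
/-- The vectors `h` tested against which `q` tends weakly to `0`, that is `⟪h, q n⟫ → 0`. -/
def weakNullSubmodule (q : ℕ → E) : Submodule 𝕜 E where
  carrier := {h | Tendsto (fun n => inner 𝕜 h (q n)) atTop (nhds 0)}
  zero_mem' := by simp
  add_mem' {h k} hh hk := by simpa [inner_add_left] using Tendsto.add hh hk
  smul_mem' c h hh := by simpa [inner_smul_left] using Tendsto.const_mul (starRingEnd 𝕜 c) hh

lemma isClosed_weakNullSubmodule {C : ℝ} (hq : ∀ n, ‖q n‖ ≤ C) :
    IsClosed (weakNullSubmodule 𝕜 q : Set E) := by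
  refine isClosed_of_closure_subset fun h hh => Metric.tendsto_atTop.2 fun ε hε => ?_
  have hC : 0 ≤ C := (norm_nonneg _).trans (hq 0)
  obtain ⟨k, hk, hhk⟩ := Metric.mem_closure_iff.1 hh (ε / 2 / (C + 1)) (by positivity)
  obtain ⟨n₀, hn₀⟩ := Metric.tendsto_atTop.1 hk (ε / 2) (by positivity)
  refine ⟨n₀, fun n hn => ?_⟩
  have h_far : ‖inner 𝕜 (h - k) (q n)‖ ≤ ε / 2 := by
    calc ‖inner 𝕜 (h - k) (q n)‖ ≤ ‖h - k‖ * ‖q n‖ := norm_inner_le_norm _ _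
      _ ≤ ε / 2 / (C + 1) * (C + 1) := by
          gcongr
          · exact (dist_eq_norm h k ▸ hhk).le
          · linarith [hq n]
      _ = ε / 2 := by field_simp
  calc dist (inner 𝕜 h (q n)) 0 = ‖inner 𝕜 (h - k) (q n) + inner 𝕜 k (q n)‖ := by
        rw [dist_zero_right, ← inner_add_left, sub_add_cancel]
    _ ≤ ‖inner 𝕜 (h - k) (q n)‖ + ‖inner 𝕜 k (q n)‖ := norm_add_le _ _
    _ < ε / 2 + ε / 2 := add_lt_add_of_le_of_lt h_far (by simpa using hn₀ n hn)
    _ = ε := add_halves ε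

/- The adjoint range contributes by `N q → 0`; on `ker N = (ran N)ᗮ` the term `N t` is invisible,
and the two subspaces together are dense. -/
lemma weakNullSubmodule_eq_top_of_isStarNormal [CompleteSpace E] {N : E →L[𝕜] E}
    (hN : IsStarNormal N) {t : ℕ → E} {C : ℝ} (hq : ∀ n, ‖q n‖ ≤ C)
    (hNq : Tendsto (fun n => N (q n)) atTop (nhds 0))
    (hqt : weakNullSubmodule 𝕜 (fun n => q n - N (t n)) = ⊤) :
    weakNullSubmodule 𝕜 q = ⊤ := by
  have h_range : (adjoint N).range ≤ weakNullSubmodule 𝕜 q := by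
    rintro _ ⟨g, rfl⟩
    have : Tendsto (fun n => inner 𝕜 g (N (q n))) atTop (nhds 0) := by
      simpa using (tendsto_const_nhds (x := g)).inner hNq
    exact this.congr fun n => (adjoint_inner_left N (q n) g).symm
  have h_ker : N.ker ≤ weakNullSubmodule 𝕜 q := by
    intro h hh
    have h_mem : h ∈ weakNullSubmodule 𝕜 (fun n => q n - N (t n)) := hqt ▸ Submodule.mem_top
    refine Tendsto.congr (fun n => ?_) h_mem
    have h_adj : adjoint N h = 0 := (IsStarNormal.adjoint_apply_eq_zero_iff hN h).2 hh
    rw [inner_sub_right, ← adjoint_inner_left, h_adj, inner_zero_left, sub_zero]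
  have h_closed : IsClosed (weakNullSubmodule 𝕜 q : Set E) := isClosed_weakNullSubmodule hq
  have : CompleteSpace (weakNullSubmodule 𝕜 q) := h_closed.completeSpace_coe
  rw [← Submodule.orthogonal_eq_bot_iff, Submodule.eq_bot_iff]
  intro h hh
  have h_mem_ker : h ∈ N.ker := by
    have := Submodule.orthogonal_le h_range hh
    rwa [ContinuousLinearMap.orthogonal_range, adjoint_adjoint] at this
  exact inner_self_eq_zero.1 (hh h (h_ker h_mem_ker))

end WeakConvergence

lemma exists_closedBall_cover_of_hausdorffMeasure_lt_top {Z : Type*} [MetricSpace Z]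
    [MeasurableSpace Z] [BorelSpace Z] [Nonempty Z] {D : Set Z} {d : ℝ} (hd : 0 < d)
    (hD : Measure.hausdorffMeasure d D < ⊤) :
    ∃ C : ℝ, ∀ δ > 0, ∃ (z : ℕ → Z) (r : ℕ → ℝ), (∀ i, 0 ≤ r i) ∧ (∀ i, r i ≤ δ) ∧
      D ⊆ ⋃ i, Metric.closedBall (z i) (r i) ∧ ∀ F : Finset ℕ, ∑ i ∈ F, r i ^ d ≤ C := by
  refine ⟨(Measure.hausdorffMeasure d D + 1).toReal, fun δ hδ => ?_⟩
  obtain ⟨t, hDt, h_diam, h_sum⟩ : ∃ t : ℕ → Set Z, D ⊆ ⋃ n, t n ∧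
      (∀ n, Metric.ediam (t n) ≤ ENNReal.ofReal δ) ∧
      ∑' n, ⨆ _ : (t n).Nonempty, Metric.ediam (t n) ^ d < Measure.hausdorffMeasure d D + 1 := by
    simp only [← exists_prop, ← iInf_lt_iff]
    refine lt_of_le_of_lt ?_ (ENNReal.lt_add_right hD.ne one_ne_zero)
    rw [Measure.hausdorffMeasure_apply d D]
    exact le_iSup₂_of_le (ENNReal.ofReal δ) (ENNReal.ofReal_pos.2 hδ) le_rfl
  have h_fin i : Metric.ediam (t i) ≠ ⊤ := ((h_diam i).trans_lt ENNReal.ofReal_lt_top).ne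
  have h_center i : ∃ z, (t i).Nonempty → z ∈ t i := by
    rcases (t i).eq_empty_or_nonempty with he | ⟨z, hz⟩
    · exact ⟨Classical.arbitrary Z, by simp [he]⟩
    · exact ⟨z, fun _ => hz⟩
  choose z hz using h_center
  refine ⟨z, fun i => (Metric.ediam (t i)).toReal, fun i => ENNReal.toReal_nonneg,
    fun i => ENNReal.toReal_le_of_le_ofReal hδ.le (h_diam i), fun x hx => ?_, fun F => ?_⟩
  · obtain ⟨i, hi⟩ := Set.mem_iUnion.1 (hDt hx)
    rw [Set.mem_iUnion]
    refine ⟨i, ?_⟩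
    rw [Metric.mem_closedBall, dist_edist]
    exact ENNReal.toReal_mono (h_fin i) (Metric.edist_le_ediam_of_mem hi (hz i ⟨x, hi⟩))
  · have h_term i : ENNReal.ofReal ((Metric.ediam (t i)).toReal ^ d) ≤
        ⨆ _ : (t i).Nonempty, Metric.ediam (t i) ^ d := by
      rw [← ENNReal.ofReal_rpow_of_nonneg ENNReal.toReal_nonneg hd.le,
        ENNReal.ofReal_toReal (h_fin i)]
      rcases (t i).eq_empty_or_nonempty with he | hne
      · simp [he, hd]
      · simp [hne]
    rw [← ENNReal.ofReal_le_iff_le_toReal (by finiteness [hD.ne]),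
      ENNReal.ofReal_sum_of_nonneg fun i _ => by positivity]
    exact (Finset.sum_le_sum fun i _ => h_term i).trans ((ENNReal.sum_le_tsum F).trans h_sum.le)

section Cells

variable {X ι : Type*} [MeasurableSpace X] {μ : Measure X}

/-- A family of pairwise disjoint measurable sets of finite measure. -/
structure Cells (μ : Measure X) (ι : Type*) where
  set : ι → Set X
  measurableSet : ∀ i, MeasurableSet (set i)
  measure_ne_top : ∀ i, μ (set i) ≠ ⊤
  pairwise_disjoint : Pairwise (Function.onFun Disjoint set)

lemma norm_sum_sq_of_pairwise_inner_eq_zero {𝕜 H : Type*} [RCLike 𝕜] [NormedAddCommGroup H]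
    [InnerProductSpace 𝕜 H] [Fintype ι] {w : ι → H}
    (hw : Pairwise fun i j => inner 𝕜 (w i) (w j) = 0) :
    ‖∑ i, w i‖ ^ 2 = ∑ i, ‖w i‖ ^ 2 := by
  have h : ((‖∑ i, w i‖ ^ 2 : ℝ) : 𝕜) = ((∑ i, ‖w i‖ ^ 2 : ℝ) : 𝕜) := by
    push_cast
    simp_rw [← inner_self_eq_norm_sq_to_K, sum_inner, inner_sum]
    exact Finset.sum_congr rfl fun i _ =>
      Finset.sum_eq_single i (fun j _ hj => hw hj.symm) (by simp)
  exact_mod_cast h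

namespace Cells

variable (P : Cells μ ι) {F : Type*} [NormedAddCommGroup F]

/-- The element of `L²` that is equal to `c` on the `i`-th cell and vanishes elsewhere. -/
noncomputable def const (i : ι) (c : F) : Lp F 2 μ :=
  indicatorConstLp 2 (P.measurableSet i) (P.measure_ne_top i) c

lemma coeFn_const (i : ι) (c : F) : P.const i c =ᵐ[μ] (P.set i).indicator fun _ => c :=
  indicatorConstLp_coeFn

lemma norm_const (i : ι) (c : F) : ‖P.const i c‖ = ‖c‖ * √(μ.real (P.set i)) := by
  rw [const, norm_indicatorConstLp two_ne_zero ENNReal.ofNat_ne_top, Real.sqrt_eq_rpow,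
    ENNReal.toReal_ofNat]

lemma sum_const_eq_indicatorConstLp_iUnion [Fintype ι]
    (hP : MeasurableSet (⋃ i, P.set i)) (hμP : μ (⋃ i, P.set i) ≠ ⊤) (c : F) :
    ∑ i, P.const i c = indicatorConstLp 2 hP hμP c := by
  refine Lp.ext ?_
  filter_upwards [Lp.coeFn_finsetSum Finset.univ fun i => P.const i c,
    eventually_all.2 fun i => P.coeFn_const i c,
    indicatorConstLp_coeFn (p := 2) (hs := hP) (hμs := hμP) (c := c)]
    with x h_sum h_const h_union
  rw [h_sum, h_union, Finset.sum_apply, Finset.sum_congr rfl fun i _ => h_const i]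
  simpa using (Finset.indicator_biUnion_apply Finset.univ P.set
    (fun i _ j _ hij => P.pairwise_disjoint hij) x (f := fun _ => c)).symm

lemma norm_sum_sq_of_ae_eq_zero_off [InnerProductSpace ℂ F] [Fintype ι] {w : ι → Lp F 2 μ}
    (hw : ∀ i, ∀ᵐ x ∂μ, x ∉ P.set i → w i x = 0) : ‖∑ i, w i‖ ^ 2 = ∑ i, ‖w i‖ ^ 2 := by
  refine norm_sum_sq_of_pairwise_inner_eq_zero (𝕜 := ℂ) fun i j hij => ?_
  change inner ℂ (w i) (w j) = 0
  rw [L2.inner_def]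
  refine integral_eq_zero_of_ae ?_
  filter_upwards [hw i, hw j] with x hi hj
  by_cases hx : x ∈ P.set i
  · rw [hj (Set.disjoint_left.1 (P.pairwise_disjoint hij) hx), inner_zero_right, Pi.zero_apply]
  · rw [hi hx, inner_zero_left, Pi.zero_apply]

lemma ae_const_eq_zero_off (i : ι) (c : F) : ∀ᵐ x ∂μ, x ∉ P.set i → P.const i c x = 0 := by
  filter_upwards [P.coeFn_const i c] with x hx hxi
  rw [hx, Set.indicator_of_notMem hxi]

end Cells

end Cells

section FinePartition

variable {X L : Type*} [MeasurableSpace X] [NormedAddCommGroup L]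

/-- A finite family of cells in `G` that misses at most measure `δ` of `G` and on whose `i`-th
cell `φ` is within `radius i ≤ δ` of a constant. The bound on the sum of squares of the radii is
what remains of the finiteness of a two-dimensional Hausdorff measure. -/
structure FinePartition (μ : Measure X) (φ : X → L) (G : Set X) (C δ : ℝ) where
  card : ℕ
  cells : Cells μ (Fin card)
  center : Fin card → L
  radius : Fin card → ℝ
  set_subset : ∀ i, cells.set i ⊆ G
  norm_sub_center_le : ∀ i, ∀ x ∈ cells.set i, ‖φ x - center i‖ ≤ radius i
  radius_nonneg : ∀ i, 0 ≤ radius i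
  radius_le : ∀ i, radius i ≤ δ
  sum_radius_sq_le : ∑ i, radius i ^ 2 ≤ C
  measure_diff_le : μ (G \ ⋃ i, cells.set i) ≤ ENNReal.ofReal δ

lemma tendsto_measure_diff_iUnion_fin {μ : Measure X} {G : Set X} (hG : MeasurableSet G)
    (hμG : μ G ≠ ⊤) {s : ℕ → Set X} (hs : ∀ i, MeasurableSet (s i))
    (hGs : ∀ᵐ x ∂μ, x ∈ G → x ∈ ⋃ i, s i) :
    Tendsto (fun n : ℕ => μ (G \ ⋃ i : Fin n, s i)) atTop (nhds 0) := by
  have h_null : μ (⋂ n : ℕ, G \ ⋃ i : Fin n, s i) = 0 := by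
    refine measure_mono_null ?_ (ae_iff.1 hGs)
    intro x hx h
    obtain ⟨i, hi⟩ := Set.mem_iUnion.1 (h (Set.mem_iInter.1 hx 0).1)
    exact (Set.mem_iInter.1 hx (i + 1)).2 (Set.mem_iUnion.2 ⟨Fin.last i, hi⟩)
  rw [← h_null]
  refine tendsto_measure_iInter_atTop (fun n => ?_) (fun m n hmn => ?_) ⟨0, ?_⟩
  · exact (hG.diff (.iUnion fun i : Fin n => hs i)).nullMeasurableSet
  · exact Set.sdiff_subset_sdiff_right <| Set.iUnion_subset fun i =>
      Set.subset_iUnion (fun j : Fin n => s j) (i.castLE hmn)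
  · exact measure_ne_top_of_subset Set.sdiff_subset hμG

lemma exists_finePartition {μ : Measure X} [MeasurableSpace L] [BorelSpace L] {φ : X → L}
    (hφ : StronglyMeasurable φ) {D : Set L} (hD : Measure.hausdorffMeasure 2 D < ⊤)
    (hφD : ∀ᵐ x ∂μ, φ x ∈ D) :
    ∃ C : ℝ, ∀ G : Set X, MeasurableSet G → μ G ≠ ⊤ → ∀ δ > 0,
      Nonempty (FinePartition μ φ G C δ) := by
  obtain ⟨C, hC⟩ := exists_closedBall_cover_of_hausdorffMeasure_lt_top two_pos hD
  refine ⟨C, fun G hG hμG δ hδ => ?_⟩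
  obtain ⟨z, r, hr0, hrδ, h_cover, h_sum⟩ := hC δ hδ
  let s : ℕ → Set X := fun i => G ∩ {x | ‖φ x - z i‖ ≤ r i}
  have hs i : MeasurableSet (s i) :=
    hG.inter (measurableSet_le (hφ.sub stronglyMeasurable_const).norm.measurable measurable_const)
  have hs_sub i : disjointed s i ⊆ s i := disjointed_le s i
  have hG_sub i : disjointed s i ⊆ G := (hs_sub i).trans Set.inter_subset_left
  have h_exhaust : ∀ᵐ x ∂μ, x ∈ G → x ∈ ⋃ i, disjointed s i := by
    filter_upwards [hφD] with x hxD hxG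
    obtain ⟨i, hi⟩ := Set.mem_iUnion.1 (h_cover hxD)
    rw [iUnion_disjointed]
    exact Set.mem_iUnion.2 ⟨i, hxG, mem_closedBall_iff_norm.1 hi⟩
  obtain ⟨n, hn⟩ := ((tendsto_measure_diff_iUnion_fin hG hμG (.disjointed hs)
    h_exhaust).eventually_le_const (ENNReal.ofReal_pos.2 hδ)).exists
  exact ⟨{
    card := n
    cells := {
      set := fun i => disjointed s i
      measurableSet := fun i => .disjointed hs i
      measure_ne_top := fun i => measure_ne_top_of_subset (hG_sub i) hμG
      pairwise_disjoint := (disjoint_disjointed s).comp_of_injective Fin.val_injective }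
    center := fun i => z i
    radius := fun i => r i
    set_subset := fun i => hG_sub i
    norm_sub_center_le := fun i x hx => (hs_sub i hx).2
    radius_nonneg := fun i => hr0 i
    radius_le := fun i => hrδ i
    sum_radius_sq_le := by
      simpa only [Finset.sum_range, Real.rpow_two] using h_sum (Finset.range n)
    measure_diff_le := hn }⟩

end FinePartition

section PointwiseOperators

variable {X : Type*} [MeasurableSpace X] {μ : Measure X}

lemma eq_top_of_forall_indicatorConstLp_mem {𝕜 F : Type*} [NontriviallyNormedField 𝕜]
    [NormedAddCommGroup F] [NormedSpace 𝕜 F] {p : ℝ≥0∞} [Fact (1 ≤ p)] (hp : p ≠ ⊤)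
    {S : Submodule 𝕜 (Lp F p μ)} (hS : IsClosed (S : Set (Lp F p μ)))
    (h : ∀ (s : Set X) (hs : MeasurableSet s) (hμs : μ s ≠ ⊤) (c : F),
      indicatorConstLp p hs hμs c ∈ S) : S = ⊤ := by
  refine eq_top_iff.2 fun f _ => Lp.induction hp (· ∈ S) (fun c s hs hμs => ?_)
    (fun f g _ _ _ hf hg => S.add_mem hf hg) hS f
  rw [Lp.simpleFunc.coe_indicatorConst]
  exact h s hs hμs.ne c

variable {E : Type*} [NormedAddCommGroup E] [InnerProductSpace ℂ E] [CompleteSpace E]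

lemma adjoint_apply_ae_eq {N : Lp E 2 μ →L[ℂ] Lp E 2 μ} {A : Lp (E →L[ℂ] E) ∞ μ}
    (hN : ∀ f, N f =ᵐ[μ] fun x => A x (f x)) (g : Lp E 2 μ) :
    adjoint N g =ᵐ[μ] fun x => adjoint (A x) (g x) := by
  have h_star (h : Lp E 2 μ) :
      (ContinuousLinearMap.id ℂ (E →L[ℂ] E)).holderL μ ∞ 2 2 (star A) h =ᵐ[μ]
        fun x => adjoint (A x) (h x) := by
    filter_upwards [(ContinuousLinearMap.id ℂ (E →L[ℂ] E)).coeFn_holder (r := 2) (star A) h,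
      Lp.coeFn_star A] with x hx hA
    rw [holderL_apply_apply, hx, hA]
    rfl
  suffices h_adj : adjoint N = (ContinuousLinearMap.id ℂ (E →L[ℂ] E)).holderL μ ∞ 2 2 (star A) by
    rw [h_adj]
    exact h_star g
  refine ((eq_adjoint_iff _ _).2 fun h f => ?_).symm
  rw [L2.inner_def, L2.inner_def]
  refine integral_congr_ae ?_
  filter_upwards [h_star h, hN f] with x hx hNx
  rw [hx, hNx, adjoint_inner_left]

lemma isStarNormal_of_ae_isStarNormal {N : Lp E 2 μ →L[ℂ] Lp E 2 μ} {A : Lp (E →L[ℂ] E) ∞ μ}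
    (hN : ∀ f, N f =ᵐ[μ] fun x => A x (f x)) (hA : ∀ᵐ x ∂μ, IsStarNormal (A x)) :
    IsStarNormal N := by
  refine isStarNormal_iff_norm_eq_adjoint.2 fun f => le_antisymm ?_ ?_
  all_goals
    refine Lp.norm_le_norm_of_ae_le ?_
    filter_upwards [hN f, adjoint_apply_ae_eq hN f, hA] with x hNx h_adj hAx
    rw [hNx, h_adj, isStarNormal_iff_norm_eq_adjoint.1 hAx]

end PointwiseOperators

section Cutoff

variable {X F : Type*} [MeasurableSpace X] {μ : Measure X} [NormedAddCommGroup F] [NormedSpace ℂ F]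
  {s : Set X} (hs : MeasurableSet s) (hμs : μ s ≠ ⊤)

variable (F) in
/-- Multiplication by the indicator function of `s` on `L²(μ; F)`. -/
noncomputable def cutoff : Lp F 2 μ →L[ℂ] Lp F 2 μ :=
  (lsmul ℂ ℂ).holderL μ ∞ 2 2 (indicatorConstLp ∞ hs hμs 1)

lemma coeFn_cutoff (f : Lp F 2 μ) : cutoff F hs hμs f =ᵐ[μ] s.indicator f := by
  filter_upwards [(lsmul ℂ ℂ).coeFn_holder (r := 2) (indicatorConstLp ∞ hs hμs (1 : ℂ)) f,
    indicatorConstLp_coeFn (p := ∞) (hs := hs) (hμs := hμs) (c := (1 : ℂ))] with x hx h_ind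
  rw [cutoff, holderL_apply_apply, hx, h_ind]
  by_cases hxs : x ∈ s <;> simp [hxs]

lemma ae_cutoff_eq_zero_off (f : Lp F 2 μ) : ∀ᵐ x ∂μ, x ∉ s → cutoff F hs hμs f x = 0 := by
  filter_upwards [coeFn_cutoff hs hμs f] with x hx hxs
  rw [hx, Set.indicator_of_notMem hxs]

lemma cutoff_apply_of_ae_eq_zero_off {f : Lp F 2 μ} (hf : ∀ᵐ x ∂μ, x ∉ s → f x = 0) :
    cutoff F hs hμs f = f := by
  refine Lp.ext ?_
  filter_upwards [coeFn_cutoff hs hμs f, hf] with x hx hfx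
  rw [hx]
  exact Set.indicator_apply_eq_self.2 hfx

lemma norm_cutoff_apply_le (f : Lp F 2 μ) : ‖cutoff F hs hμs f‖ ≤ ‖f‖ := by
  refine Lp.norm_le_norm_of_ae_le ?_
  filter_upwards [coeFn_cutoff hs hμs f] with x hx
  rw [hx]
  exact norm_indicator_le_norm_self f x

end Cutoff

section Coordinates

variable {X K : Type*} [MeasurableSpace X] {μ : Measure X}

lemma hasSum_dualPairing {𝕜 ι H : Type*} [RCLike 𝕜] {E F : ι → Type*}
    [∀ i, NormedAddCommGroup (E i)] [∀ i, NormedSpace 𝕜 (E i)]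
    [∀ i, NormedAddCommGroup (F i)] [∀ i, NormedSpace 𝕜 (F i)]
    [NormedAddCommGroup H] [NormedSpace 𝕜 H] [CompleteSpace H]
    {p q : ℝ≥0∞} [Fact (1 ≤ p)] [Fact (1 ≤ q)] [p.HolderConjugate q]
    (B : (i : ι) → E i →L[𝕜] F i →L[𝕜] H) {C : ℝ≥0} (hB : ∀ i, ‖B i‖ ≤ C)
    (e : lp E p) (f : lp F q) :
    HasSum (fun i => B i (e i) (f i)) (lp.dualPairing p q B hB e f) := by
  have h_mem := (lp.memℓp e).holder 1 (lp.memℓp f) B hB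
  have h_norm : Summable fun i => ‖B i (e i) (f i)‖ := by
    simpa using h_mem.summable (by simp)
  exact h_norm.of_norm.hasSum

lemma norm_sq_eq_integral_norm_sq {F : Type*} [NormedAddCommGroup F] [InnerProductSpace ℂ F]
    (f : Lp F 2 μ) : ‖f‖ ^ 2 = ∫ x, ‖f x‖ ^ 2 ∂μ := by
  rw [norm_sq_eq_re_inner (𝕜 := ℂ), L2.inner_def, ← integral_re (L2.integrable_inner f f)]
  simp_rw [inner_self_eq_norm_sq]

lemma sum_norm_evalCLM_compLp_sq_le (u : Lp (lp (fun _ : K => ℂ) 2) 2 μ) (s : Finset K) :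
    ∑ k ∈ s, ‖(lp.evalCLM ℂ (fun _ : K => ℂ) 2 k).compLp u‖ ^ 2 ≤ ‖u‖ ^ 2 := by
  simp_rw [norm_sq_eq_integral_norm_sq]
  rw [← integral_finsetSum s fun k _ => (Lp.memLp _).integrable_norm_pow two_ne_zero]
  refine integral_mono_ae (integrable_finsetSum s fun k _ =>
    (Lp.memLp _).integrable_norm_pow two_ne_zero) ((Lp.memLp u).integrable_norm_pow two_ne_zero) ?_
  have h_eval : ∀ᵐ x ∂μ, ∀ k ∈ s, (lp.evalCLM ℂ (fun _ : K => ℂ) 2 k).compLp u x = u x k :=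
    (Finset.eventually_all s).2 fun k _ =>
      (lp.evalCLM ℂ (fun _ : K => ℂ) 2 k).coeFn_compLp u
  filter_upwards [h_eval] with x hx
  rw [Finset.sum_congr rfl fun k hk => by rw [hx k hk]]
  simpa using lp.sum_rpow_le_norm_rpow (p := 2) (by simp) (u x) s

/-- The coordinate functions of a square integrable `ℓ²`-valued function, as a contraction
`L²(μ; ℓ²(K)) → ℓ²(K; L²(μ))`. -/
noncomputable def coordinates :
    Lp (lp (fun _ : K => ℂ) 2) 2 μ →L[ℂ] lp (fun _ : K => Lp ℂ 2 μ) 2 :=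
  LinearMap.mkContinuous
    { toFun := fun u => ⟨fun k => (lp.evalCLM ℂ (fun _ : K => ℂ) 2 k).compLp u,
        memℓp_gen' (C := ‖u‖ ^ 2) fun s => by
          simpa using sum_norm_evalCLM_compLp_sq_le u s⟩
      map_add' := fun u v => by
        ext1; funext k
        exact ((lp.evalCLM ℂ (fun _ : K => ℂ) 2 k).compLpL 2 μ).map_add u v
      map_smul' := fun c u => by
        ext1; funext k
        exact ((lp.evalCLM ℂ (fun _ : K => ℂ) 2 k).compLpL 2 μ).map_smul c u } 1 fun u => by
    refine lp.norm_le_of_forall_sum_le (by simp) (by positivity) fun s => ?_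
    simpa using sum_norm_evalCLM_compLp_sq_le u s

lemma norm_coordinates_le :
    ‖(coordinates : Lp (lp (fun _ : K => ℂ) 2) 2 μ →L[ℂ] lp (fun _ : K => Lp ℂ 2 μ) 2)‖ ≤ 1 :=
  LinearMap.mkContinuous_norm_le _ zero_le_one _

lemma coeFn_coordinates (u : Lp (lp (fun _ : K => ℂ) 2) 2 μ) (k : K) :
    coordinates u k =ᵐ[μ] fun x => u x k :=
  (lp.evalCLM ℂ (fun _ : K => ℂ) 2 k).coeFn_compLp u

end Coordinates

section RowExtension

variable {X K E : Type*} [MeasurableSpace X] {μ : Measure X} [NormedAddCommGroup E]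
  [NormedSpace ℂ E]

lemma norm_flip_lsmul_le : ‖(lsmul ℂ ℂ : ℂ →L[ℂ] (E →L[ℂ] E) →L[ℂ] (E →L[ℂ] E)).flip‖ ≤ 1 :=
  (opNorm_flip _).trans_le opNorm_lsmul_le

lemma norm_flip_compL_apply_le {H : Type*} [NormedAddCommGroup H] [NormedSpace ℂ H]
    (W : H →L[ℂ] E) : ‖(compL ℂ H E E).flip W‖ ≤ ‖W‖ :=
  opNorm_le_bound _ (norm_nonneg W) fun A => (opNorm_comp_le A W).trans_eq (mul_comm _ _)

variable [CompleteSpace E] (β : lp (fun _ : K => E →L[ℂ] E) 2)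

/-- The linear pencil `z ↦ ∑ k, z k • β k` of a square summable family of operators. -/
noncomputable def pencil : lp (fun _ : K => ℂ) 2 →L[ℂ] E →L[ℂ] E :=
  lp.dualPairing 2 2 (fun _ => (lsmul ℂ ℂ).flip) (K := 1) (fun _ => norm_flip_lsmul_le) β

lemma hasSum_pencil (z : lp (fun _ : K => ℂ) 2) : HasSum (fun k => z k • β k) (pencil β z) := by
  rw [pencil]
  exact hasSum_dualPairing (p := 2) (q := 2) (fun _ : K => (lsmul ℂ ℂ).flip) (C := 1)
    (fun _ => norm_flip_lsmul_le) β z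

lemma norm_pencil_le : ‖pencil β‖ ≤ ‖β‖ := by
  rw [pencil]
  refine (le_of_opNorm_le _ (lp.norm_dualPairing _ _) β).trans_eq ?_
  rw [NNReal.coe_one, one_mul]

/-- The row operator `u ↦ ∑ k, β k (W (u k))`, where `u k` is the `k`-th coordinate function
of `u`. -/
noncomputable def rowExtension (W : Lp ℂ 2 μ →L[ℂ] E) :
    Lp (lp (fun _ : K => ℂ) 2) 2 μ →L[ℂ] E :=
  lp.dualPairing 2 2 (fun _ => (compL ℂ (Lp ℂ 2 μ) E E).flip W) (K := ‖W‖₊)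
    (fun _ => norm_flip_compL_apply_le W) β ∘L coordinates

variable (W : Lp ℂ 2 μ →L[ℂ] E)

lemma hasSum_rowExtension (u : Lp (lp (fun _ : K => ℂ) 2) 2 μ) :
    HasSum (fun k => β k (W (coordinates u k))) (rowExtension β W u) := by
  rw [rowExtension, comp_apply]
  exact hasSum_dualPairing (p := 2) (q := 2) (fun _ : K => (compL ℂ (Lp ℂ 2 μ) E E).flip W)
    (C := ‖W‖₊) (fun _ => norm_flip_compL_apply_le W) β (coordinates u)

lemma norm_rowExtension_le : ‖rowExtension β W‖ ≤ ‖β‖ * ‖W‖ := by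
  rw [rowExtension, mul_comm]
  refine (opNorm_comp_le _ _).trans ((mul_le_of_le_one_right (norm_nonneg _)
    norm_coordinates_le).trans ?_)
  exact le_of_opNorm_le _ (lp.norm_dualPairing _ _) β

lemma coordinates_compLp_toSpanSingleton (z : lp (fun _ : K => ℂ) 2) (f : Lp ℂ 2 μ) (k : K) :
    coordinates ((toSpanSingleton ℂ z).compLp f) k = z k • f := by
  refine Lp.ext ?_
  filter_upwards [coeFn_coordinates ((toSpanSingleton ℂ z).compLp f) k,
    (toSpanSingleton ℂ z).coeFn_compLp f, Lp.coeFn_smul (z k) f] with x hx hz h_smul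
  rw [hx, hz, h_smul]
  simp [mul_comm]

lemma rowExtension_compLp_toSpanSingleton (z : lp (fun _ : K => ℂ) 2) (f : Lp ℂ 2 μ) :
    rowExtension β W ((toSpanSingleton ℂ z).compLp f) = pencil β z (W f) := by
  have h := (hasSum_pencil β z).mapL (apply ℂ E (W f))
  refine (hasSum_rowExtension β W _).unique (h.congr_fun fun k => ?_)
  rw [coordinates_compLp_toSpanSingleton, map_smul, map_smul]
  rfl

lemma rowExtension_comp_left {A : E →L[ℂ] E} (hA : ∀ k, Commute A (β k)) :
    rowExtension β (A ∘L W) = A ∘L rowExtension β W := by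
  ext u
  refine (hasSum_rowExtension β _ u).unique (((hasSum_rowExtension β W u).mapL A).congr_fun
    fun k => ?_)
  exact (DFunLike.congr_fun (hA k).eq _).symm

end RowExtension

section ElementaryOperator

variable {X K E : Type*} [MeasurableSpace X] {μ : Measure X} (Φ : Lp (lp (fun _ : K => ℂ) 2) ∞ μ)

/-- Multiplication of scalar functions by the `ℓ²`-valued function `Φ`. -/
noncomputable def symbolMul : Lp ℂ 2 μ →L[ℂ] Lp (lp (fun _ : K => ℂ) 2) 2 μ :=
  (lsmul ℂ ℂ).flip.holderL μ ∞ 2 2 Φ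

lemma coeFn_symbolMul (f : Lp ℂ 2 μ) : symbolMul Φ f =ᵐ[μ] fun x => f x • Φ x :=
  (lsmul ℂ ℂ).flip.coeFn_holder (r := 2) Φ f

variable {Φ} in
lemma norm_symbolMul_sub_le {s : Set X} {z : lp (fun _ : K => ℂ) 2} {r : ℝ}
    (hΦ : ∀ x ∈ s, ‖Φ x - z‖ ≤ r) {f : Lp ℂ 2 μ} (hf : ∀ᵐ x ∂μ, x ∉ s → f x = 0) :
    ‖symbolMul Φ f - (toSpanSingleton ℂ z).compLp f‖ ≤ r * ‖f‖ := by
  refine Lp.norm_le_mul_norm_of_ae_le_mul ?_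
  filter_upwards [Lp.coeFn_sub (symbolMul Φ f) ((toSpanSingleton ℂ z).compLp f),
    coeFn_symbolMul Φ f, (toSpanSingleton ℂ z).coeFn_compLp f, hf] with x h_sub hΦx hz hfx
  rw [h_sub, Pi.sub_apply, hΦx, hz, toSpanSingleton_apply, ← smul_sub, norm_smul, mul_comm]
  by_cases hx : x ∈ s
  · gcongr
    exact hΦ x hx
  · simp [hfx hx]

section Banach

variable [NormedAddCommGroup E] [NormedSpace ℂ E] [CompleteSpace E]
  (β : lp (fun _ : K => E →L[ℂ] E) 2) {W : Lp ℂ 2 μ →L[ℂ] E}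

/-- The elementary operator `W ↦ ∑ k, β k ∘ W ∘ M_{Φ k}`, where `M_{Φ k}` is multiplication by the
`k`-th coordinate of `Φ`. -/
noncomputable def elementaryOp (W : Lp ℂ 2 μ →L[ℂ] E) : Lp ℂ 2 μ →L[ℂ] E :=
  rowExtension β W ∘L symbolMul Φ

lemma hasSum_elementaryOp (W : Lp ℂ 2 μ →L[ℂ] E) (f : Lp ℂ 2 μ) :
    HasSum (fun k => β k (W (coordinates (symbolMul Φ f) k))) (elementaryOp Φ β W f) :=
  hasSum_rowExtension β W (symbolMul Φ f)

lemma elementaryOp_zero : elementaryOp Φ β 0 = 0 := by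
  ext f
  exact (hasSum_elementaryOp Φ β 0 f).unique (by simp)

variable {Φ β} in
lemma elementaryOp_comp_left {A : E →L[ℂ] E} (hA : ∀ k, Commute A (β k)) :
    elementaryOp Φ β (A ∘L W) = A ∘L elementaryOp Φ β W := by
  rw [elementaryOp, rowExtension_comp_left β W hA, elementaryOp, comp_assoc]

lemma coordinates_symbolMul_cutoff {s : Set X} (hs : MeasurableSet s) (hμs : μ s ≠ ⊤)
    (f : Lp ℂ 2 μ) (k : K) :
    coordinates (symbolMul Φ (cutoff ℂ hs hμs f)) k =
      cutoff ℂ hs hμs (coordinates (symbolMul Φ f) k) := by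
  refine Lp.ext ?_
  filter_upwards [coeFn_cutoff hs hμs (coordinates (symbolMul Φ f) k),
    coeFn_coordinates (symbolMul Φ f) k, coeFn_symbolMul Φ f,
    coeFn_coordinates (symbolMul Φ (cutoff ℂ hs hμs f)) k,
    coeFn_symbolMul Φ (cutoff ℂ hs hμs f), coeFn_cutoff hs hμs f] with x h₁ h₂ h₃ h₄ h₅ h₆
  rw [h₁, h₄, h₅, h₆]
  by_cases hx : x ∈ s <;> simp [hx, h₂, h₃]

lemma elementaryOp_comp_cutoff {s : Set X} (hs : MeasurableSet s) (hμs : μ s ≠ ⊤) :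
    elementaryOp Φ β (W ∘L cutoff ℂ hs hμs) = elementaryOp Φ β W ∘L cutoff ℂ hs hμs := by
  ext f
  refine (hasSum_elementaryOp Φ β _ f).unique ?_
  simpa only [comp_apply, coordinates_symbolMul_cutoff] using
    hasSum_elementaryOp Φ β W (cutoff ℂ hs hμs f)

variable {Φ} {s : Set X} {z : lp (fun _ : K => ℂ) 2} {r : ℝ}

lemma norm_elementaryOp_apply_sub_pencil_apply_le (hΦ : ∀ x ∈ s, ‖Φ x - z‖ ≤ r)
    {f : Lp ℂ 2 μ} (hf : ∀ᵐ x ∂μ, x ∉ s → f x = 0) :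
    ‖elementaryOp Φ β W f - pencil β z (W f)‖ ≤ ‖β‖ * ‖W‖ * (r * ‖f‖) := by
  rw [← rowExtension_compLp_toSpanSingleton, elementaryOp, comp_apply, ← map_sub]
  exact le_of_opNorm_le_of_le _ (norm_rowExtension_le β W) (norm_symbolMul_sub_le hΦ hf)

lemma norm_elementaryOp_sub_pencil_comp_le (hr : 0 ≤ r) (hΦ : ∀ x ∈ s, ‖Φ x - z‖ ≤ r)
    {hs : MeasurableSet s} {hμs : μ s ≠ ⊤} (hW : W ∘L cutoff ℂ hs hμs = W) :
    ‖elementaryOp Φ β W - pencil β z ∘L W‖ ≤ ‖β‖ * r * ‖W‖ := by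
  refine opNorm_le_bound _ (by positivity) fun f => ?_
  have h_cut : elementaryOp Φ β W - pencil β z ∘L W =
      (elementaryOp Φ β W - pencil β z ∘L W) ∘L cutoff ℂ hs hμs := by
    rw [sub_comp, comp_assoc, ← elementaryOp_comp_cutoff, hW]
  rw [h_cut]
  calc ‖elementaryOp Φ β W (cutoff ℂ hs hμs f) - pencil β z (W (cutoff ℂ hs hμs f))‖
      ≤ ‖β‖ * ‖W‖ * (r * ‖cutoff ℂ hs hμs f‖) :=
        norm_elementaryOp_apply_sub_pencil_apply_le β hΦ (ae_cutoff_eq_zero_off hs hμs f)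
    _ ≤ ‖β‖ * ‖W‖ * (r * ‖f‖) := by gcongr; exact norm_cutoff_apply_le hs hμs f
    _ = ‖β‖ * r * ‖W‖ * ‖f‖ := by ring

lemma commute_pencil {A : E →L[ℂ] E} (hA : ∀ k, Commute A (β k)) (z : lp (fun _ : K => ℂ) 2) :
    Commute A (pencil β z) := by
  refine ((hasSum_pencil β z).mul_left A).unique (((hasSum_pencil β z).mul_right A).congr_fun
    fun k => ?_)
  rw [mul_smul_comm, smul_mul_assoc, (hA k).eq]

end Banach

section Hilbert

variable [NormedAddCommGroup E] [InnerProductSpace ℂ E] [CompleteSpace E]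
  {β : lp (fun _ : K => E →L[ℂ] E) 2} {Φ} {T : Lp ℂ 2 μ →L[ℂ] E}

lemma isStarNormal_pencil (hβ : ∀ k, IsStarNormal (β k)) (hβ_comm : ∀ j k, Commute (β j) (β k))
    (z : lp (fun _ : K => ℂ) 2) : IsStarNormal (pencil β z) := by
  refine ⟨commute_pencil β (fun k => ?_) z⟩
  have h_star : Commute (star (β k)) (pencil β z) :=
    commute_pencil β (fun j => (hβ k).commute_star_left (hβ_comm k j)) z
  simpa using h_star.star_star.symm

variable {s : Set X} {hs : MeasurableSet s} {hμs : μ s ≠ ⊤} {z : lp (fun _ : K => ℂ) 2} {r : ℝ}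

lemma norm_pencil_apply_le_of_comp_cutoff_eq (hβ : ∀ k, IsStarNormal (β k))
    (hβ_comm : ∀ j k, Commute (β j) (β k)) (hT : T ∈ zeroSpectralSubspace (elementaryOp Φ β))
    (hTs : T ∘L cutoff ℂ hs hμs = T) (hr : 0 ≤ r) (hΦ : ∀ x ∈ s, ‖Φ x - z‖ ≤ r) (f : Lp ℂ 2 μ) :
    ‖pencil β z (T f)‖ ≤ ‖β‖ * r * ‖T f‖ := by
  let L (W : Lp ℂ 2 μ →L[ℂ] E) : Lp ℂ 2 μ →L[ℂ] E := pencil β z ∘L W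
  let R (W : Lp ℂ 2 μ →L[ℂ] E) : Lp ℂ 2 μ →L[ℂ] E := W ∘L cutoff ℂ hs hμs
  have hΔL : Function.Commute (elementaryOp Φ β) L := fun W =>
    elementaryOp_comp_left fun k => (commute_pencil β (hβ_comm k) z).symm
  have hRΔ : Function.Commute R (elementaryOp Φ β) := fun W =>
    (elementaryOp_comp_cutoff Φ β hs hμs).symm
  have hRL : Function.Commute R L := fun W => comp_assoc _ _ _
  have h_fixed (n i : ℕ) : R (L^[n] ((elementaryOp Φ β)^[i] T)) =
      L^[n] ((elementaryOp Φ β)^[i] T) := by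
    rw [hRL.iterate_right n, hRΔ.iterate_right i, show R T = T from hTs]
  have h_pow (n : ℕ) : (pencil β z ^ n) (T f) = L^[n] T f := by
    induction n with
    | zero => rfl
    | succ n ih => rw [pow_succ', mul_apply_eq_comp, ih, Function.iterate_succ_apply', comp_apply]
  rcases (norm_nonneg (T f)).eq_or_lt with h0 | hpos
  · simp [norm_eq_zero.1 h0.symm]
  rw [← div_le_iff₀ hpos]
  refine le_of_forall_pos_le_add fun ε hε => (div_le_iff₀ hpos).2 ?_
  obtain ⟨c, hc⟩ := exists_norm_iterate_le_of_mem_zeroSpectralSubspace hT hε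
  have h_iterate := norm_iterate_le_of_commute_of_norm_sub_le hΔL hc
    (fun n i => norm_elementaryOp_sub_pencil_comp_le β hr hΦ (h_fixed n i)) (by positivity)
  refine norm_apply_le_of_forall_norm_pow_apply_le (isStarNormal_pencil hβ hβ_comm z)
    (c := c * ‖f‖) (by positivity) fun n => ?_
  rw [h_pow, add_comm, mul_right_comm]
  exact le_of_opNorm_le _ (h_iterate n) f

lemma norm_pencil_apply_le_of_mem_zeroSpectralSubspace (hβ : ∀ k, IsStarNormal (β k))
    (hβ_comm : ∀ j k, Commute (β j) (β k)) (hT : T ∈ zeroSpectralSubspace (elementaryOp Φ β))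
    (hs : MeasurableSet s) (hμs : μ s ≠ ⊤) (hr : 0 ≤ r) (hΦ : ∀ x ∈ s, ‖Φ x - z‖ ≤ r)
    {f : Lp ℂ 2 μ} (hf : ∀ᵐ x ∂μ, x ∉ s → f x = 0) :
    ‖pencil β z (T f)‖ ≤ ‖β‖ * r * ‖T f‖ := by
  have h_norm (W : Lp ℂ 2 μ →L[ℂ] E) : ‖W ∘L cutoff ℂ hs hμs‖ ≤ 1 * ‖W‖ := by
    refine opNorm_le_bound _ (by positivity) fun g => ?_
    rw [one_mul]
    exact W.le_of_opNorm_le_of_le le_rfl (norm_cutoff_apply_le hs hμs g)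
  have h_semiconj : Function.Semiconj (fun W => W ∘L cutoff ℂ hs hμs) (elementaryOp Φ β)
      (elementaryOp Φ β) := fun W => (elementaryOp_comp_cutoff Φ β hs hμs).symm
  have h_mem := apply_mem_zeroSpectralSubspace_of_semiconj h_semiconj one_pos h_norm hT
  have h_cut : (T ∘L cutoff ℂ hs hμs) ∘L cutoff ℂ hs hμs = T ∘L cutoff ℂ hs hμs := by
    ext g
    simp only [comp_apply]
    rw [cutoff_apply_of_ae_eq_zero_off hs hμs (ae_cutoff_eq_zero_off hs hμs g)]
  simpa only [comp_apply, cutoff_apply_of_ae_eq_zero_off hs hμs hf] using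
    norm_pencil_apply_le_of_comp_cutoff_eq hβ hβ_comm h_mem h_cut hr hΦ f

end Hilbert

end ElementaryOperator

section PencilMultiplication

variable {X K E : Type*} [MeasurableSpace X] {μ : Measure X} [NormedAddCommGroup E]
  [InnerProductSpace ℂ E] [CompleteSpace E] (β : lp (fun _ : K => E →L[ℂ] E) 2)
  (Φ : Lp (lp (fun _ : K => ℂ) 2) ∞ μ)

/-- The decomposable operator on `L²(μ; E)` that acts as `pencil β (Φ x)` in the fibre over `x`. -/
noncomputable def pencilMul : Lp E 2 μ →L[ℂ] Lp E 2 μ :=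
  (pencil β).holderL μ ∞ 2 2 Φ

lemma coeFn_pencilMul (f : Lp E 2 μ) :
    pencilMul β Φ f =ᵐ[μ] fun x => pencil β (Φ x) (f x) :=
  (pencil β).coeFn_holder (r := 2) Φ f

variable {β} in
lemma isStarNormal_pencilMul (hβ : ∀ k, IsStarNormal (β k))
    (hβ_comm : ∀ j k, Commute (β j) (β k)) : IsStarNormal (pencilMul β Φ) := by
  have h_comp := (pencil β).coeFn_compLp Φ
  refine isStarNormal_of_ae_isStarNormal (A := (pencil β).compLp Φ) (fun f => ?_) ?_
  · filter_upwards [coeFn_pencilMul β Φ f, h_comp] with x hx h_comp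
    rw [hx, h_comp]
  · filter_upwards [h_comp] with x hx
    exact hx ▸ isStarNormal_pencil hβ hβ_comm (Φ x)

namespace Cells

variable {ι : Type*} (P : Cells μ ι)

lemma ae_pencilMul_const_eq_zero_off (i : ι) (c : E) :
    ∀ᵐ x ∂μ, x ∉ P.set i → pencilMul β Φ (P.const i c) x = 0 := by
  filter_upwards [coeFn_pencilMul β Φ (P.const i c), P.ae_const_eq_zero_off i c] with x hx hc hxi
  rw [hx, hc hxi, map_zero]

variable {β Φ} in
lemma norm_pencilMul_const_le {i : ι} {z : lp (fun _ : K => ℂ) 2} {r : ℝ}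
    (hΦ : ∀ x ∈ P.set i, ‖Φ x - z‖ ≤ r) {c : E} (hc : ‖pencil β z c‖ ≤ ‖β‖ * r * ‖c‖) :
    ‖pencilMul β Φ (P.const i c)‖ ≤ 2 * ‖β‖ * r * ‖P.const i c‖ := by
  refine Lp.norm_le_mul_norm_of_ae_le_mul ?_
  filter_upwards [coeFn_pencilMul β Φ (P.const i c), P.coeFn_const i c] with x hx h_const
  rw [hx, h_const]
  by_cases hxi : x ∈ P.set i
  · rw [Set.indicator_of_mem hxi]
    have h_near : ‖pencil β (Φ x - z) c‖ ≤ ‖β‖ * r * ‖c‖ := le_of_opNorm_le _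
      (le_of_opNorm_le_of_le _ (norm_pencil_le β) (hΦ x hxi)) c
    calc ‖pencil β (Φ x) c‖ = ‖pencil β (Φ x - z) c + pencil β z c‖ := by
          rw [← add_apply, ← map_add, sub_add_cancel]
      _ ≤ ‖β‖ * r * ‖c‖ + ‖β‖ * r * ‖c‖ := norm_add_le_of_le h_near hc
      _ = 2 * ‖β‖ * r * ‖c‖ := by ring
  · simp [hxi]

lemma inner_indicatorConstLp_const (i : ι) (c : E) {s : Set X} (hs : MeasurableSet s)
    (hμs : μ s ≠ ⊤) (e : E) : inner ℂ (indicatorConstLp 2 hs hμs e) (P.const i c) =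
      inner ℂ e (μ.real (P.set i ∩ s) • c) := by
  rw [L2.inner_indicatorConstLp_eq_inner_setIntegral, const,
    setIntegral_indicatorConstLp hs]

lemma inner_indicatorConstLp_pencilMul_const (i : ι) (c : E) {s : Set X} (hs : MeasurableSet s)
    (hμs : μ s ≠ ⊤) (e : E) :
    inner ℂ (indicatorConstLp 2 hs hμs e) (pencilMul β Φ (P.const i c)) =
      inner ℂ e (pencil β (∫ x in P.set i ∩ s, Φ x ∂μ) c) := by
  rw [L2.inner_indicatorConstLp_eq_inner_setIntegral]
  congr 1
  have h_ae : ∀ᵐ x ∂μ.restrict s, pencilMul β Φ (P.const i c) x =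
      (P.set i).indicator (fun x => (pencil β).flip c (Φ x)) x := by
    filter_upwards [ae_restrict_of_ae (coeFn_pencilMul β Φ (P.const i c)),
      ae_restrict_of_ae (P.coeFn_const i c)] with x hx h_const
    rw [hx, h_const]
    by_cases hxi : x ∈ P.set i <;> simp [hxi]
  rw [integral_congr_ae h_ae, setIntegral_indicator (P.measurableSet i), Set.inter_comm,
    integral_comp_comm _ (integrableOn_Lp_of_measure_ne_top Φ le_top
      (measure_ne_top_of_subset Set.inter_subset_right hμs))]
  rfl

end Cells

end PencilMultiplication

section Averages

namespace Cells

variable {X E ι : Type*} [MeasurableSpace X] {μ : Measure X} [NormedAddCommGroup E]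
  [InnerProductSpace ℂ E] (P : Cells μ ι) (W : Lp ℂ 2 μ →L[ℂ] E)

/-- The average of the (virtual) kernel of `W` over the `i`-th cell, which is `0` for a null
cell. -/
noncomputable def average (i : ι) : E :=
  (μ.real (P.set i))⁻¹ • W (P.const i 1)

/-- The step function whose value on each cell is the average of the (virtual) kernel of `W`. -/
noncomputable def averages [Fintype ι] : Lp E 2 μ :=
  ∑ i, P.const i (P.average W i)

variable {P W}

lemma norm_const_one (i : ι) : ‖P.const i (1 : ℂ)‖ = √(μ.real (P.set i)) := by
  rw [norm_const, norm_one, one_mul]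

lemma norm_const_average_le {i : ι} {κ : ℝ} (hκ : 0 ≤ κ)
    (hW : ‖W (P.const i 1)‖ ≤ κ * √(μ.real (P.set i))) :
    ‖P.const i (P.average W i)‖ ≤ κ := by
  set m := μ.real (P.set i)
  calc ‖P.const i (P.average W i)‖ = m⁻¹ * ‖W (P.const i 1)‖ * √m := by
        rw [norm_const, average, norm_smul, Real.norm_of_nonneg (by positivity)]
    _ ≤ m⁻¹ * (κ * √m) * √m := by gcongr
    _ = κ * (m⁻¹ * (√m * √m)) := by ring
    _ ≤ κ * 1 := by
        rw [Real.mul_self_sqrt measureReal_nonneg]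
        gcongr
        exact inv_mul_le_one
    _ = κ := mul_one κ

lemma measureReal_smul_average (i : ι) :
    μ.real (P.set i) • P.average W i = W (P.const i 1) := by
  rcases eq_or_ne (μ.real (P.set i)) 0 with h0 | h0
  · have : P.const i (1 : ℂ) = 0 := norm_eq_zero.1 (by rw [norm_const_one, h0, Real.sqrt_zero])
    rw [h0, zero_smul, this, map_zero]
  · rw [average, smul_inv_smul₀ h0]

end Cells

end Averages

namespace FinePartition

section Orthogonality

variable {X L F : Type*} [MeasurableSpace X] {μ : Measure X} [NormedAddCommGroup L]
  [NormedAddCommGroup F] [InnerProductSpace ℂ F] {φ : X → L} {G : Set X} {C δ : ℝ}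
  (P : FinePartition μ φ G C δ)

lemma norm_sum_sq_le_of_norm_le_mul_radius {w : Fin P.card → Lp F 2 μ}
    (hw : ∀ i, ∀ᵐ x ∂μ, x ∉ P.cells.set i → w i x = 0) {κ : ℝ}
    (hκ : ∀ i, ‖w i‖ ≤ κ * P.radius i) : ‖∑ i, w i‖ ^ 2 ≤ κ ^ 2 * C := by
  calc ‖∑ i, w i‖ ^ 2 = ∑ i, ‖w i‖ ^ 2 := P.cells.norm_sum_sq_of_ae_eq_zero_off hw
    _ ≤ ∑ i, (κ * P.radius i) ^ 2 := by gcongr with i; exact hκ i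
    _ = κ ^ 2 * ∑ i, P.radius i ^ 2 := by simp_rw [mul_pow, Finset.mul_sum]
    _ ≤ κ ^ 2 * C := by gcongr; exact P.sum_radius_sq_le

lemma sum_measureReal_set_le (hμG : μ G ≠ ⊤) : ∑ i, μ.real (P.cells.set i) ≤ μ.real G := by
  rw [← measureReal_iUnion_fintype P.cells.pairwise_disjoint P.cells.measurableSet
    P.cells.measure_ne_top]
  exact measureReal_mono (Set.iUnion_subset P.set_subset) hμG

lemma inner_indicatorConstLp_averages [CompleteSpace F] (W : Lp ℂ 2 μ →L[ℂ] F)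
    (hG : MeasurableSet G) (hμG : μ G ≠ ⊤) (e : F) :
    inner ℂ (indicatorConstLp 2 hG hμG e) (P.cells.averages W) =
      inner ℂ e (W (∑ i, P.cells.const i 1)) := by
  rw [Cells.averages, inner_sum, map_sum, inner_sum]
  refine Finset.sum_congr rfl fun i _ => ?_
  rw [P.cells.inner_indicatorConstLp_const, Set.inter_eq_left.2 (P.set_subset i),
    Cells.measureReal_smul_average]

end Orthogonality

variable {X K E : Type*} [MeasurableSpace X] {μ : Measure X} [NormedAddCommGroup E]
  [InnerProductSpace ℂ E] [CompleteSpace E] {β : lp (fun _ : K => E →L[ℂ] E) 2}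
  {Φ : Lp (lp (fun _ : K => ℂ) 2) ∞ μ} {T : Lp ℂ 2 μ →L[ℂ] E} {G : Set X} {C δ : ℝ}
  (P : FinePartition μ Φ G C δ)

lemma norm_pencil_center_apply_const_le (hβ : ∀ k, IsStarNormal (β k))
    (hβ_comm : ∀ j k, Commute (β j) (β k)) (hT : T ∈ zeroSpectralSubspace (elementaryOp Φ β))
    (i : Fin P.card) :
    ‖pencil β (P.center i) (T (P.cells.const i 1))‖ ≤
      ‖β‖ * P.radius i * ‖T (P.cells.const i 1)‖ :=
  norm_pencil_apply_le_of_mem_zeroSpectralSubspace hβ hβ_comm hT (P.cells.measurableSet i)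
    (P.cells.measure_ne_top i) (P.radius_nonneg i) (P.norm_sub_center_le i)
    (P.cells.ae_const_eq_zero_off i 1)

lemma norm_elementaryOp_apply_const_le (hβ : ∀ k, IsStarNormal (β k))
    (hβ_comm : ∀ j k, Commute (β j) (β k)) (hT : T ∈ zeroSpectralSubspace (elementaryOp Φ β))
    (i : Fin P.card) :
    ‖elementaryOp Φ β T (P.cells.const i 1)‖ ≤
      2 * ‖β‖ * ‖T‖ * P.radius i * √(μ.real (P.cells.set i)) := by
  set χ : Lp ℂ 2 μ := P.cells.const i 1
  have hχ : ‖χ‖ = √(μ.real (P.cells.set i)) := Cells.norm_const_one i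
  have hr := P.radius_nonneg i
  have h_center : ‖pencil β (P.center i) (T χ)‖ ≤ ‖β‖ * P.radius i * (‖T‖ * ‖χ‖) :=
    (P.norm_pencil_center_apply_const_le hβ hβ_comm hT i).trans (by gcongr; exact T.le_opNorm χ)
  have h_near := norm_elementaryOp_apply_sub_pencil_apply_le (W := T) β (P.norm_sub_center_le i)
    (P.cells.ae_const_eq_zero_off i (1 : ℂ))
  calc ‖elementaryOp Φ β T χ‖
      = ‖elementaryOp Φ β T χ - pencil β (P.center i) (T χ) + pencil β (P.center i) (T χ)‖ := by
        rw [sub_add_cancel]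
    _ ≤ ‖β‖ * ‖T‖ * (P.radius i * ‖χ‖) + ‖β‖ * P.radius i * (‖T‖ * ‖χ‖) :=
        norm_add_le_of_le h_near h_center
    _ = 2 * ‖β‖ * ‖T‖ * P.radius i * √(μ.real (P.cells.set i)) := by rw [hχ]; ring

lemma norm_averages_elementaryOp_sq_le (hβ : ∀ k, IsStarNormal (β k))
    (hβ_comm : ∀ j k, Commute (β j) (β k)) (hT : T ∈ zeroSpectralSubspace (elementaryOp Φ β)) :
    ‖P.cells.averages (elementaryOp Φ β T)‖ ^ 2 ≤ (2 * ‖β‖ * ‖T‖) ^ 2 * C := by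
  refine P.norm_sum_sq_le_of_norm_le_mul_radius
    (fun i => P.cells.ae_const_eq_zero_off i _) fun i => ?_
  have := P.radius_nonneg i
  exact Cells.norm_const_average_le (by positivity)
    (P.norm_elementaryOp_apply_const_le hβ hβ_comm hT i)

lemma norm_pencilMul_const_average_le (hβ : ∀ k, IsStarNormal (β k))
    (hβ_comm : ∀ j k, Commute (β j) (β k)) (hT : T ∈ zeroSpectralSubspace (elementaryOp Φ β))
    (i : Fin P.card) :
    ‖pencilMul β Φ (P.cells.const i (P.cells.average T i))‖ ≤
      2 * ‖β‖ * P.radius i * ‖P.cells.const i (P.cells.average T i)‖ := by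
  refine P.cells.norm_pencilMul_const_le (P.norm_sub_center_le i) ?_
  rw [Cells.average, map_smul_of_tower, norm_smul, norm_smul, mul_left_comm]
  gcongr
  exact P.norm_pencil_center_apply_const_le hβ hβ_comm hT i

lemma norm_pencilMul_averages_sq_le (hβ : ∀ k, IsStarNormal (β k))
    (hβ_comm : ∀ j k, Commute (β j) (β k)) (hT : T ∈ zeroSpectralSubspace (elementaryOp Φ β)) :
    ‖pencilMul β Φ (P.cells.averages T)‖ ^ 2 ≤ (2 * ‖β‖ * ‖T‖) ^ 2 * C := by
  rw [Cells.averages, map_sum]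
  refine P.norm_sum_sq_le_of_norm_le_mul_radius
    (fun i => P.cells.ae_pencilMul_const_eq_zero_off β Φ i _) fun i => ?_
  have hr := P.radius_nonneg i
  have h_average : ‖P.cells.const i (P.cells.average T i)‖ ≤ ‖T‖ :=
    Cells.norm_const_average_le (norm_nonneg T)
      ((T.le_opNorm _).trans_eq (by rw [Cells.norm_const_one]))
  calc ‖pencilMul β Φ (P.cells.const i (P.cells.average T i))‖
      ≤ 2 * ‖β‖ * P.radius i * ‖P.cells.const i (P.cells.average T i)‖ :=
        P.norm_pencilMul_const_average_le hβ hβ_comm hT i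
    _ ≤ 2 * ‖β‖ * P.radius i * ‖T‖ := by gcongr
    _ = 2 * ‖β‖ * ‖T‖ * P.radius i := by ring

lemma norm_pencilMul_averages_sq_le_mul_norm_averages_sq (hβ : ∀ k, IsStarNormal (β k))
    (hβ_comm : ∀ j k, Commute (β j) (β k)) (hT : T ∈ zeroSpectralSubspace (elementaryOp Φ β)) :
    ‖pencilMul β Φ (P.cells.averages T)‖ ^ 2 ≤
      (2 * ‖β‖ * δ) ^ 2 * ‖P.cells.averages T‖ ^ 2 := by
  rw [Cells.averages, map_sum,
    P.cells.norm_sum_sq_of_ae_eq_zero_off fun i => P.cells.ae_pencilMul_const_eq_zero_off β Φ i _,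
    P.cells.norm_sum_sq_of_ae_eq_zero_off fun i => P.cells.ae_const_eq_zero_off i _,
    Finset.mul_sum]
  refine Finset.sum_le_sum fun i _ => ?_
  rw [← mul_pow]
  refine pow_le_pow_left₀ (norm_nonneg _)
    ((P.norm_pencilMul_const_average_le hβ hβ_comm hT i).trans ?_) 2
  gcongr
  exact P.radius_le i

section AveragingDefect

variable (s : Set X)

/-- The failure of averaging over the `i`-th cell to intertwine `elementaryOp` with `pencilMul`,
when tested against functions supported on `s`. -/
noncomputable def defect (i : Fin P.card) : Lp (lp (fun _ : K => ℂ) 2) 2 μ :=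
  (μ.real (P.cells.set i))⁻¹ • (μ.real (P.cells.set i ∩ s) • symbolMul Φ (P.cells.const i 1) -
    (toSpanSingleton ℂ (∫ x in P.cells.set i ∩ s, Φ x ∂μ)).compLp (P.cells.const i (1 : ℂ)))

lemma coeFn_defect (i : Fin P.card) :
    P.defect s i =ᵐ[μ] fun x => (μ.real (P.cells.set i))⁻¹ • P.cells.const i (1 : ℂ) x •
      (μ.real (P.cells.set i ∩ s) • Φ x - ∫ y in P.cells.set i ∩ s, Φ y ∂μ) := by
  set χ : Lp ℂ 2 μ := P.cells.const i 1
  set z := ∫ y in P.cells.set i ∩ s, Φ y ∂μ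
  filter_upwards [Lp.coeFn_smul (μ.real (P.cells.set i))⁻¹
      (μ.real (P.cells.set i ∩ s) • symbolMul Φ χ - (toSpanSingleton ℂ z).compLp χ),
    Lp.coeFn_sub (μ.real (P.cells.set i ∩ s) • symbolMul Φ χ) ((toSpanSingleton ℂ z).compLp χ),
    Lp.coeFn_smul (μ.real (P.cells.set i ∩ s)) (symbolMul Φ χ), coeFn_symbolMul Φ χ,
    (toSpanSingleton ℂ z).coeFn_compLp χ] with x h_smul h_sub h_weight h_symbol h_comp
  rw [defect, h_smul, Pi.smul_apply, h_sub, Pi.sub_apply, h_weight, Pi.smul_apply, h_symbol,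
    h_comp, toSpanSingleton_apply, smul_comm, ← smul_sub]

lemma norm_measureReal_smul_sub_setIntegral_le {i : Fin P.card} {x : X}
    (hx : x ∈ P.cells.set i) :
    ‖μ.real (P.cells.set i ∩ s) • Φ x - ∫ y in P.cells.set i ∩ s, Φ y ∂μ‖ ≤
      2 * P.radius i * μ.real (P.cells.set i ∩ s) := by
  have h_fin : μ (P.cells.set i ∩ s) ≠ ⊤ :=
    measure_ne_top_of_subset Set.inter_subset_left (P.cells.measure_ne_top i)
  rw [← setIntegral_const, ← integral_sub (integrableOn_const (C := Φ x) h_fin).integrable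
    (integrableOn_Lp_of_measure_ne_top Φ le_top h_fin)]
  refine norm_setIntegral_le_of_norm_le_const h_fin.lt_top fun y hy => ?_
  calc ‖Φ x - Φ y‖ ≤ ‖Φ x - P.center i‖ + ‖Φ y - P.center i‖ := by
        rw [← sub_sub_sub_cancel_right]; exact norm_sub_le _ _
    _ ≤ P.radius i + P.radius i :=
        add_le_add (P.norm_sub_center_le i x hx) (P.norm_sub_center_le i y hy.1)
    _ = 2 * P.radius i := (two_mul _).symm

lemma ae_defect_eq_zero_off (i : Fin P.card) :
    ∀ᵐ x ∂μ, x ∉ P.cells.set i → P.defect s i x = 0 := by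
  filter_upwards [P.coeFn_defect s i, P.cells.ae_const_eq_zero_off i (1 : ℂ)] with x hx h_off hxi
  rw [hx, h_off hxi, zero_smul, smul_zero]

lemma norm_defect_le (i : Fin P.card) :
    ‖P.defect s i‖ ≤ 2 * δ * √(μ.real (P.cells.set i)) := by
  rw [← Cells.norm_const_one (P := P.cells) i]
  refine Lp.norm_le_mul_norm_of_ae_le_mul ?_
  have hδ := (P.radius_nonneg i).trans (P.radius_le i)
  filter_upwards [P.coeFn_defect s i, P.cells.ae_const_eq_zero_off i (1 : ℂ)] with x hx h_off
  by_cases hxi : x ∈ P.cells.set i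
  · set m := μ.real (P.cells.set i)
    have h_inter : μ.real (P.cells.set i ∩ s) ≤ m :=
      measureReal_mono Set.inter_subset_left (P.cells.measure_ne_top i)
    rw [hx, norm_smul, norm_smul, norm_inv, Real.norm_of_nonneg measureReal_nonneg]
    calc m⁻¹ * (‖P.cells.const i (1 : ℂ) x‖ *
          ‖μ.real (P.cells.set i ∩ s) • Φ x - ∫ y in P.cells.set i ∩ s, Φ y ∂μ‖)
        ≤ m⁻¹ * (‖P.cells.const i (1 : ℂ) x‖ * (2 * δ * m)) := by
          gcongr
          refine (P.norm_measureReal_smul_sub_setIntegral_le s hxi).trans ?_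
          gcongr
          · exact P.radius_le i
      _ = m⁻¹ * m * (2 * δ * ‖P.cells.const i (1 : ℂ) x‖) := by ring
      _ ≤ 2 * δ * ‖P.cells.const i (1 : ℂ) x‖ :=
          mul_le_of_le_one_left (by positivity) inv_mul_le_one
  · rw [hx, h_off hxi]; simp

lemma norm_sum_defect_sq_le (hμG : μ G ≠ ⊤) :
    ‖∑ i, P.defect s i‖ ^ 2 ≤ (2 * δ) ^ 2 * μ.real G := by
  calc ‖∑ i, P.defect s i‖ ^ 2 = ∑ i, ‖P.defect s i‖ ^ 2 :=
        P.cells.norm_sum_sq_of_ae_eq_zero_off (P.ae_defect_eq_zero_off s)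
    _ ≤ ∑ i, (2 * δ * √(μ.real (P.cells.set i))) ^ 2 := by gcongr with i; exact P.norm_defect_le s i
    _ = (2 * δ) ^ 2 * ∑ i, μ.real (P.cells.set i) := by
        simp_rw [mul_pow, Real.sq_sqrt measureReal_nonneg, Finset.mul_sum]
    _ ≤ (2 * δ) ^ 2 * μ.real G := by gcongr; exact P.sum_measureReal_set_le hμG

variable {s}

lemma inner_indicatorConstLp_averages_elementaryOp_sub (β : lp (fun _ : K => E →L[ℂ] E) 2)
    (T : Lp ℂ 2 μ →L[ℂ] E) (hs : MeasurableSet s) (hμs : μ s ≠ ⊤) (e : E) :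
    inner ℂ (indicatorConstLp 2 hs hμs e)
        (P.cells.averages (elementaryOp Φ β T) - pencilMul β Φ (P.cells.averages T)) =
      inner ℂ e (rowExtension β T (∑ i, P.defect s i)) := by
  rw [inner_sub_right, Cells.averages, Cells.averages, map_sum, map_sum, inner_sum, inner_sum,
    inner_sum, ← Finset.sum_sub_distrib]
  refine Finset.sum_congr rfl fun i _ => ?_
  rw [Cells.inner_indicatorConstLp_const, Cells.inner_indicatorConstLp_pencilMul_const,
    ← inner_sub_right, Cells.average, Cells.average, defect, map_smul_of_tower, map_smul_of_tower,
    map_sub, map_smul_of_tower, rowExtension_compLp_toSpanSingleton, smul_sub, smul_comm]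
  rfl

lemma norm_inner_indicatorConstLp_averages_elementaryOp_sub_le (hδ : 0 ≤ δ)
    (β : lp (fun _ : K => E →L[ℂ] E) 2) (T : Lp ℂ 2 μ →L[ℂ] E) (hμG : μ G ≠ ⊤)
    (hs : MeasurableSet s) (hμs : μ s ≠ ⊤) (e : E) :
    ‖inner ℂ (indicatorConstLp 2 hs hμs e)
        (P.cells.averages (elementaryOp Φ β T) - pencilMul β Φ (P.cells.averages T))‖ ≤
      ‖e‖ * (‖β‖ * ‖T‖ * (2 * δ * √(μ.real G))) := by
  rw [P.inner_indicatorConstLp_averages_elementaryOp_sub]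
  have h_defect : ‖∑ i, P.defect s i‖ ≤ 2 * δ * √(μ.real G) := by
    refine le_of_sq_le_sq ?_ (by positivity)
    rw [mul_pow, Real.sq_sqrt measureReal_nonneg]
    exact P.norm_sum_defect_sq_le s hμG
  refine (norm_inner_le_norm _ _).trans ?_
  gcongr
  exact (le_of_opNorm_le _ (norm_rowExtension_le β T) _).trans (by gcongr)

end AveragingDefect

end FinePartition

section WeakLimit

variable {X K E : Type*} [MeasurableSpace X] {μ : Measure X} [NormedAddCommGroup E]
  [InnerProductSpace ℂ E] [CompleteSpace E] {β : lp (fun _ : K => E →L[ℂ] E) 2}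
  {Φ : Lp (lp (fun _ : K => ℂ) 2) ∞ μ} {T : Lp ℂ 2 μ →L[ℂ] E}

lemma elementaryOp_mem_zeroSpectralSubspace (hT : T ∈ zeroSpectralSubspace (elementaryOp Φ β)) :
    elementaryOp Φ β T ∈ zeroSpectralSubspace (elementaryOp Φ β) := by
  refine apply_mem_zeroSpectralSubspace_of_semiconj (C := ‖β‖ * ‖symbolMul Φ‖ + 1)
    (fun _ => rfl) (by positivity) (fun W => ?_) hT
  calc ‖elementaryOp Φ β W‖ ≤ ‖rowExtension β W‖ * ‖symbolMul Φ‖ := opNorm_comp_le _ _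
    _ ≤ ‖β‖ * ‖W‖ * ‖symbolMul Φ‖ := by gcongr; exact norm_rowExtension_le β W
    _ = ‖β‖ * ‖symbolMul Φ‖ * ‖W‖ := by ring
    _ ≤ (‖β‖ * ‖symbolMul Φ‖ + 1) * ‖W‖ := by gcongr; exact le_add_of_nonneg_right zero_le_one

variable {G : Set X} {C : ℝ} {δ : ℕ → ℝ} (P : ∀ n, FinePartition μ Φ G C (δ n))

lemma tendsto_sum_const_one (hδ : Tendsto δ atTop (nhds 0)) (hG : MeasurableSet G)
    (hμG : μ G ≠ ⊤) :
    Tendsto (fun n => ∑ i, (P n).cells.const i (1 : ℂ)) atTop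
      (nhds (indicatorConstLp 2 hG hμG 1)) := by
  have h_subset (n : ℕ) : ⋃ i, (P n).cells.set i ⊆ G := Set.iUnion_subset (P n).set_subset
  have h_meas (n : ℕ) : MeasurableSet (⋃ i, (P n).cells.set i) :=
    .iUnion (P n).cells.measurableSet
  have h_fin (n : ℕ) : μ (⋃ i, (P n).cells.set i) ≠ ⊤ :=
    measure_ne_top_of_subset (h_subset n) hμG
  simp_rw [fun n => (P n).cells.sum_const_eq_indicatorConstLp_iUnion (h_meas n) (h_fin n) (1 : ℂ)]
  refine tendsto_indicatorConstLp_set (by norm_num) ?_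
  have h_ofReal : Tendsto (fun n => ENNReal.ofReal (δ n)) atTop (nhds 0) := by
    simpa using ENNReal.tendsto_ofReal hδ
  refine tendsto_of_tendsto_of_tendsto_of_le_of_le tendsto_const_nhds h_ofReal
    (fun _ => zero_le) fun n => ?_
  rw [symmDiff_of_le (h_subset n)]
  exact (P n).measure_diff_le

lemma weakNullSubmodule_averages_elementaryOp_sub_eq_top (hβ : ∀ k, IsStarNormal (β k))
    (hβ_comm : ∀ j k, Commute (β j) (β k)) (hT : T ∈ zeroSpectralSubspace (elementaryOp Φ β))
    (hδ : Tendsto δ atTop (nhds 0)) (hδ_nonneg : ∀ n, 0 ≤ δ n) (hμG : μ G ≠ ⊤) :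
    weakNullSubmodule ℂ (fun n => (P n).cells.averages (elementaryOp Φ β T) -
      pencilMul β Φ ((P n).cells.averages T)) = ⊤ := by
  have h_bound (n : ℕ) : ‖(P n).cells.averages (elementaryOp Φ β T) -
      pencilMul β Φ ((P n).cells.averages T)‖ ≤
        √((2 * ‖β‖ * ‖T‖) ^ 2 * C) + √((2 * ‖β‖ * ‖T‖) ^ 2 * C) :=
    norm_sub_le_of_le
      (Real.le_sqrt_of_sq_le ((P n).norm_averages_elementaryOp_sq_le hβ hβ_comm hT))
      (Real.le_sqrt_of_sq_le ((P n).norm_pencilMul_averages_sq_le hβ hβ_comm hT))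
  refine eq_top_of_forall_indicatorConstLp_mem (by norm_num) (isClosed_weakNullSubmodule h_bound)
    fun s hs hμs e => ?_
  have h_lim : Tendsto (fun n => ‖e‖ * (‖β‖ * ‖T‖ * (2 * δ n * √(μ.real G)))) atTop (nhds 0) := by
    simpa using (((hδ.const_mul 2).mul_const √(μ.real G)).const_mul (‖β‖ * ‖T‖)).const_mul ‖e‖
  exact squeeze_zero_norm (fun n => (P n).norm_inner_indicatorConstLp_averages_elementaryOp_sub_le
    (hδ_nonneg n) β T hμG hs hμs e) h_lim

lemma tendsto_pencilMul_averages_elementaryOp (hβ : ∀ k, IsStarNormal (β k))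
    (hβ_comm : ∀ j k, Commute (β j) (β k)) (hT : T ∈ zeroSpectralSubspace (elementaryOp Φ β))
    (hδ : Tendsto δ atTop (nhds 0)) :
    Tendsto (fun n => pencilMul β Φ ((P n).cells.averages (elementaryOp Φ β T))) atTop
      (nhds 0) := by
  have h_lim : Tendsto (fun n => (2 * ‖β‖ * δ n) ^ 2 * ((2 * ‖β‖ * ‖T‖) ^ 2 * C)) atTop
      (nhds 0) := by
    simpa using ((hδ.const_mul (2 * ‖β‖)).pow 2).mul_const ((2 * ‖β‖ * ‖T‖) ^ 2 * C)
  have h_sq : Tendsto (fun n => ‖pencilMul β Φ ((P n).cells.averages (elementaryOp Φ β T))‖ ^ 2)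
      atTop (nhds 0) := by
    refine squeeze_zero (fun _ => sq_nonneg _) (fun n => ?_) h_lim
    refine ((P n).norm_pencilMul_averages_sq_le_mul_norm_averages_sq hβ hβ_comm
      (elementaryOp_mem_zeroSpectralSubspace hT)).trans ?_
    gcongr
    exact (P n).norm_averages_elementaryOp_sq_le hβ hβ_comm hT
  rw [tendsto_zero_iff_norm_tendsto_zero]
  simpa using h_sq.sqrt

lemma elementaryOp_apply_indicatorConstLp_eq_zero (P : ∀ n, FinePartition μ Φ G C (δ n))
    (hβ : ∀ k, IsStarNormal (β k))
    (hβ_comm : ∀ j k, Commute (β j) (β k)) (hT : T ∈ zeroSpectralSubspace (elementaryOp Φ β))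
    (hδ : Tendsto δ atTop (nhds 0)) (hδ_nonneg : ∀ n, 0 ≤ δ n) (hG : MeasurableSet G)
    (hμG : μ G ≠ ⊤) :
    elementaryOp Φ β T (indicatorConstLp 2 hG hμG 1) = 0 := by
  have h_top : weakNullSubmodule ℂ (fun n => (P n).cells.averages (elementaryOp Φ β T)) = ⊤ :=
    weakNullSubmodule_eq_top_of_isStarNormal (isStarNormal_pencilMul Φ hβ hβ_comm)
      (fun n => Real.le_sqrt_of_sq_le ((P n).norm_averages_elementaryOp_sq_le hβ hβ_comm hT))
      (tendsto_pencilMul_averages_elementaryOp P hβ hβ_comm hT hδ)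
      (weakNullSubmodule_averages_elementaryOp_sub_eq_top P hβ hβ_comm hT hδ hδ_nonneg hμG)
  refine ext_inner_left ℂ fun e => ?_
  have h_zero : indicatorConstLp 2 hG hμG e ∈
      weakNullSubmodule ℂ (fun n => (P n).cells.averages (elementaryOp Φ β T)) :=
    h_top ▸ Submodule.mem_top
  have h_lim := ((elementaryOp Φ β T).continuous.tendsto _).comp
    (tendsto_sum_const_one P hδ hG hμG)
  rw [inner_zero_right]
  refine tendsto_nhds_unique (tendsto_const_nhds.inner h_lim) ?_
  exact h_zero.congr fun n => (P n).inner_indicatorConstLp_averages _ hG hμG e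

end WeakLimit

section Vanishing

variable {X K E : Type*} [MeasurableSpace X] {μ : Measure X} [NormedAddCommGroup E]
  [InnerProductSpace ℂ E] [CompleteSpace E] [MeasurableSpace (lp (fun _ : K => ℂ) 2)]
  [BorelSpace (lp (fun _ : K => ℂ) 2)] {β : lp (fun _ : K => E →L[ℂ] E) 2}
  {Φ : Lp (lp (fun _ : K => ℂ) 2) ∞ μ} {D : Set (lp (fun _ : K => ℂ) 2)}
  {T : Lp ℂ 2 μ →L[ℂ] E}

theorem mem_zeroSpectralSubspace_elementaryOp_iff (hβ : ∀ k, IsStarNormal (β k))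
    (hβ_comm : ∀ j k, Commute (β j) (β k)) (hD : Measure.hausdorffMeasure 2 D < ⊤)
    (hΦD : ∀ᵐ x ∂μ, Φ x ∈ D) :
    T ∈ zeroSpectralSubspace (elementaryOp Φ β) ↔ elementaryOp Φ β T = 0 := by
  refine ⟨fun hT => ?_, mem_zeroSpectralSubspace_of_apply_eq_zero (elementaryOp_zero Φ β)⟩
  obtain ⟨C, hC⟩ := exists_finePartition (Lp.stronglyMeasurable Φ) hD hΦD
  suffices h_ker : LinearMap.ker (elementaryOp Φ β T).toLinearMap = ⊤ by
    ext1 f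
    exact LinearMap.mem_ker.1 (h_ker ▸ Submodule.mem_top)
  refine eq_top_of_forall_indicatorConstLp_mem (by norm_num) (elementaryOp Φ β T).isClosed_ker
    fun G hG hμG c => ?_
  have P (n : ℕ) : FinePartition μ Φ G C (1 / (n + 1 : ℝ)) :=
    (hC G hG hμG _ Nat.one_div_pos_of_nat).some
  have h_one := elementaryOp_apply_indicatorConstLp_eq_zero P hβ hβ_comm hT
    tendsto_one_div_add_atTop_nhds_zero_nat (fun _ => Nat.one_div_pos_of_nat.le) hG hμG
  have h_smul : indicatorConstLp 2 hG hμG c = c • indicatorConstLp 2 hG hμG (1 : ℂ) := by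
    rw [indicatorConstLp, indicatorConstLp, ← MemLp.toLp_const_smul]
    refine MemLp.toLp_congr _ _ (.of_forall fun x => ?_)
    by_cases hx : x ∈ G <;> simp [hx]
  rw [LinearMap.mem_ker, h_smul, map_smul]
  exact smul_eq_zero_of_right c h_one

end Vanishing

section MultiplicationOperator

variable {X : Type*} [MeasurableSpace X] {μ : Measure X} {a b : X → ℂ} {c : ℝ}
  {M N : Lp ℂ 2 μ →L[ℂ] Lp ℂ 2 μ}

lemma norm_le_of_ae_eq_mul (hac : ∀ x, ‖a x‖ ≤ c)
    (hM : ∀ f : Lp ℂ 2 μ, M f =ᵐ[μ] fun x => a x * f x) : ‖M‖ ≤ |c| := by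
  refine M.opNorm_le_bound (abs_nonneg c) fun f => Lp.norm_le_mul_norm_of_ae_le_mul ?_
  filter_upwards [hM f] with x hx
  rw [hx, norm_mul]
  gcongr
  exact (hac x).trans (le_abs_self c)

lemma commute_of_ae_eq_mul (hM : ∀ f : Lp ℂ 2 μ, M f =ᵐ[μ] fun x => a x * f x)
    (hN : ∀ f : Lp ℂ 2 μ, N f =ᵐ[μ] fun x => b x * f x) : Commute M N := by
  ext1 f
  refine Lp.ext ?_
  filter_upwards [hM (N f), hN (M f), hM f, hN f] with x hMN hNM hMf hNf
  rw [mul_apply_eq_comp, mul_apply_eq_comp, hMN, hNM, hMf, hNf, mul_left_comm]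

lemma isStarNormal_of_ae_eq_mul (ha : Measurable a) (hac : ∀ x, ‖a x‖ ≤ c)
    (hM : ∀ f : Lp ℂ 2 μ, M f =ᵐ[μ] fun x => a x * f x) : IsStarNormal M := by
  have ha_top : MemLp a ∞ μ := memLp_top_of_bound ha.aestronglyMeasurable c (.of_forall hac)
  have h_comp := (toSpanSingleton ℂ (1 : ℂ →L[ℂ] ℂ)).coeFn_compLp ha_top.toLp
  refine isStarNormal_of_ae_isStarNormal
    (A := (toSpanSingleton ℂ (1 : ℂ →L[ℂ] ℂ)).compLp ha_top.toLp) (fun f => ?_) ?_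
  · filter_upwards [hM f, h_comp, ha_top.coeFn_toLp] with x hx h_comp h_toLp
    rw [hx, h_comp, h_toLp]
    rfl
  · filter_upwards [h_comp] with x hx
    rw [hx, toSpanSingleton_apply]
    infer_instance

end MultiplicationOperator

section JointValues

variable {X K : Type*} [MeasurableSpace X] {μ : Measure X} {a : K → X → ℂ} {c : K → ℝ}

lemma stronglyMeasurable_lp_of_measurable_apply [Countable K] {φ : X → lp (fun _ : K => ℂ) 2}
    (hφ : ∀ k, Measurable fun x => φ x k) : StronglyMeasurable φ := by
  classical
  refine stronglyMeasurable_of_tendsto (atTop : Filter (Finset K))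
    (f := fun F x => ∑ k ∈ F, lp.single 2 k (φ x k)) (fun F => ?_) ?_
  · refine Finset.stronglyMeasurable_fun_sum _ fun k _ => ?_
    exact (lp.isometry_single (E := fun _ : K => ℂ) (p := 2) k).continuous.comp_stronglyMeasurable
      (hφ k).stronglyMeasurable
  · exact tendsto_pi_nhds.2 fun x => lp.hasSum_single (by norm_num) (φ x)

lemma exists_symbol_ae_eq [Countable K] (ha : ∀ k, Measurable (a k))
    (hac : ∀ k x, ‖a k x‖ ≤ c k) (hc : Summable fun k => c k ^ 2) :
    ∃ Φ : Lp (lp (fun _ : K => ℂ) 2) ∞ μ, ∀ᵐ x ∂μ, ∀ k, Φ x k = a k x := by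
  have h_memℓp (x : X) : Memℓp (fun k => a k x) 2 := by
    refine memℓp_gen (hc.of_nonneg_of_le (fun k => by positivity) fun k => ?_)
    simpa using pow_le_pow_left₀ (norm_nonneg _) (hac k x) 2
  set φ : X → lp (fun _ : K => ℂ) 2 := fun x => ⟨fun k => a k x, h_memℓp x⟩
  have hφ_le (x : X) : ‖φ x‖ ≤ √(∑' k, c k ^ 2) := by
    refine lp.norm_le_of_forall_sum_le (by norm_num) (Real.sqrt_nonneg _) fun F => ?_
    simp only [ENNReal.toReal_ofNat, Real.rpow_ofNat]
    rw [Real.sq_sqrt (tsum_nonneg fun k => sq_nonneg _)]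
    exact (Finset.sum_le_sum fun k _ => pow_le_pow_left₀ (norm_nonneg _) (hac k x) 2).trans
      (hc.sum_le_tsum F fun k _ => sq_nonneg _)
  have hφ : MemLp φ ∞ μ := memLp_top_of_bound
    (stronglyMeasurable_lp_of_measurable_apply ha).aestronglyMeasurable _ (.of_forall hφ_le)
  refine ⟨hφ.toLp, ?_⟩
  filter_upwards [hφ.coeFn_toLp] with x hx k
  rw [hx]

end JointValues

section General

variable {X K E : Type*} [MeasurableSpace X] {μ : Measure X} [NormedAddCommGroup E]

lemma tsum_comp_comp_eq_elementaryOp [NormedSpace ℂ E] [CompleteSpace E]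
    {a : K → X → ℂ} {c : K → ℝ} (hac : ∀ k x, ‖a k x‖ ≤ c k) (hc : Summable fun k => c k ^ 2)
    {M : K → (Lp ℂ 2 μ →L[ℂ] Lp ℂ 2 μ)}
    (hM : ∀ (k : K) (f : Lp ℂ 2 μ), M k f =ᵐ[μ] fun x => a k x * f x)
    {Φ : Lp (lp (fun _ : K => ℂ) 2) ∞ μ} (hΦ : ∀ᵐ x ∂μ, ∀ k, Φ x k = a k x)
    (β : lp (fun _ : K => E →L[ℂ] E) 2) (W : Lp ℂ 2 μ →L[ℂ] E) :
    ∑' k, β k ∘L W ∘L M k = elementaryOp Φ β W := by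
  have hβ : Summable fun k => ‖β k‖ ^ 2 := by
    simpa using (lp.memℓp β).summable (by norm_num)
  have h_summable : Summable fun k => β k ∘L W ∘L M k := by
    refine .of_norm_bounded ((hβ.add hc).mul_left ‖W‖) fun k => ?_
    have hMk : ‖M k‖ ≤ |c k| := norm_le_of_ae_eq_mul (hac k) (hM k)
    calc ‖β k ∘L W ∘L M k‖ ≤ ‖β k‖ * (‖W‖ * |c k|) := by
          grw [opNorm_comp_le, opNorm_comp_le, hMk]
      _ = ‖W‖ * (‖β k‖ * |c k|) := by ring
      _ ≤ ‖W‖ * (‖β k‖ ^ 2 + c k ^ 2) := by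
          gcongr
          rw [← sq_abs (c k)]
          nlinarith [two_mul_le_add_sq ‖β k‖ |c k|, norm_nonneg (β k), abs_nonneg (c k)]
  have h_coord (f : Lp ℂ 2 μ) (k : K) : coordinates (symbolMul Φ f) k = M k f := by
    refine Lp.ext ?_
    filter_upwards [coeFn_coordinates (symbolMul Φ f) k, coeFn_symbolMul Φ f, hM k f, hΦ]
      with x h_coord h_symbol hMx hΦx
    rw [h_coord, h_symbol, hMx, lp.coeFn_smul, Pi.smul_apply, hΦx, smul_eq_mul, mul_comm]
  ext1 f
  refine ((apply ℂ E f).hasSum h_summable.hasSum).unique ?_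
  simpa only [h_coord, apply_apply, comp_apply] using! hasSum_elementaryOp Φ β W f

variable [InnerProductSpace ℂ E] [CompleteSpace E]

theorem zero_spectral_subspace_eq_ker_general [Countable K]
    [MeasurableSpace (lp (fun _ : K => ℂ) 2)] [BorelSpace (lp (fun _ : K => ℂ) 2)]
    {a : K → X → ℂ} {c : K → ℝ} {M : K → (Lp ℂ 2 μ →L[ℂ] Lp ℂ 2 μ)} {B : K → E →L[ℂ] E}
    (ha : ∀ k, Measurable (a k)) (hac : ∀ k x, ‖a k x‖ ≤ c k) (hc : Summable fun k => c k ^ 2)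
    (hM : ∀ (k : K) (f : Lp ℂ 2 μ), M k f =ᵐ[μ] fun x => a k x * f x)
    (hB : ∀ k, IsStarNormal (B k)) (hB_comm : ∀ j k, Commute (B j) (B k))
    (hB_summable : Summable fun k => ‖B k‖ ^ 2) {D : Set (lp (fun _ : K => ℂ) 2)}
    (hD : Measure.hausdorffMeasure 2 D < ⊤)
    (haD : ∀ᵐ x ∂μ, ∃ z : lp (fun _ : K => ℂ) 2, z ∈ D ∧ ∀ k, z k = a k x)
    (T : Lp ℂ 2 μ →L[ℂ] E) :
    T ∈ zeroSpectralSubspace (fun S : Lp ℂ 2 μ →L[ℂ] E => ∑' k, B k ∘L S ∘L M k) ↔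
      ∑' k, B k ∘L T ∘L M k = 0 := by
  obtain ⟨Φ, hΦ⟩ := exists_symbol_ae_eq (μ := μ) ha hac hc
  have hΦD : ∀ᵐ x ∂μ, Φ x ∈ D := by
    filter_upwards [hΦ, haD] with x hx ⟨z, hzD, hz⟩
    rwa [lp.ext (funext fun k => (hx k).trans (hz k).symm)]
  let β : lp (fun _ : K => E →L[ℂ] E) 2 := ⟨B, memℓp_gen (by simpa using hB_summable)⟩
  have h_eq : ∀ S : Lp ℂ 2 μ →L[ℂ] E, ∑' k, B k ∘L S ∘L M k = elementaryOp Φ β S :=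
    tsum_comp_comp_eq_elementaryOp hac hc hM hΦ β
  simp_rw [h_eq]
  exact mem_zeroSpectralSubspace_elementaryOp_iff hB hB_comm hD hΦD

end General

/-- For a multiplication operator `Δ(T) = ∑ k M_{b k} T M_{a k}` with commuting normal
coefficients whose left coefficient family has essential Hausdorff dimension at most 2
(the joint values `(a k x)ₖ` lie a.e. in a set `D ⊆ ℓ²(K)` of finite two-dimensional
Hausdorff measure), the 0-spectral subspace of `Δ` coincides with `ker Δ`:
`‖Δⁿ(T)‖^{1/n} → 0` iff `Δ(T) = 0`. -/
theorem zero_spectral_subspace_eq_ker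
    {X Y : Type*} [MeasurableSpace X] [MeasurableSpace Y]
    [StandardBorelSpace X] [StandardBorelSpace Y]
    (μ : Measure X) (ν : Measure Y) [SigmaFinite μ] [SigmaFinite ν]
    {K : Type*} [Countable K]
    [MeasurableSpace (lp (fun _ : K => ℂ) 2)] [BorelSpace (lp (fun _ : K => ℂ) 2)]
    (a : K → X → ℂ) (b : K → Y → ℂ)
    (ha : ∀ k, Measurable (a k)) (hb : ∀ k, Measurable (b k))
    (Ca Cb : K → ℝ)
    (haC : ∀ k x, ‖a k x‖ ≤ Ca k) (hbC : ∀ k y, ‖b k y‖ ≤ Cb k)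
    (hCa : Summable fun k => Ca k ^ 2) (hCb : Summable fun k => Cb k ^ 2)
    (Ma : K → (Lp ℂ 2 μ →L[ℂ] Lp ℂ 2 μ)) (Mb : K → (Lp ℂ 2 ν →L[ℂ] Lp ℂ 2 ν))
    (hMa : ∀ (k : K) (f : Lp ℂ 2 μ), ⇑(Ma k f) =ᵐ[μ] fun x => a k x * f x)
    (hMb : ∀ (k : K) (g : Lp ℂ 2 ν), ⇑(Mb k g) =ᵐ[ν] fun y => b k y * g y)
    (D : Set (lp (fun _ : K => ℂ) 2))
    (hD : Measure.hausdorffMeasure 2 D < ⊤)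
    (haD : ∀ᵐ x ∂μ, ∃ lam : lp (fun _ : K => ℂ) 2, lam ∈ D ∧ ∀ k, lam k = a k x)
    (T : Lp ℂ 2 μ →L[ℂ] Lp ℂ 2 ν) :
    Tendsto
      (fun n : ℕ =>
        ‖(fun S : Lp ℂ 2 μ →L[ℂ] Lp ℂ 2 ν => ∑' k, Mb k ∘L S ∘L Ma k)^[n] T‖ ^ ((1 : ℝ) / n))
      atTop (nhds 0) ↔
    (∑' k, Mb k ∘L T ∘L Ma k) = 0 := by
  have hMb_summable : Summable fun k => ‖Mb k‖ ^ 2 :=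
    hCb.of_nonneg_of_le (fun _ => sq_nonneg _) fun k =>
      sq_le_sq.2 ((abs_norm _).trans_le (norm_le_of_ae_eq_mul (hbC k) (hMb k)))
  exact zero_spectral_subspace_eq_ker_general ha haC hCa hMa
    (fun k => isStarNormal_of_ae_eq_mul (hb k) (hbC k) (hMb k))
    (fun j k => commute_of_ae_eq_mul (hMb j) (hMb k)) hMb_summable hD haD T
end
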